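/- Let (R, m) be an analytically unramified Noetherian local ring with conductor ideal 𝔠, and suppose R is seminormal, i.e. R is reduced and for all b, c ∈ R with b^3 = c^2 there exists a ∈ R with a^2 = b and a^3 = c. If Ext^i_R(𝔠, 𝔠) = 0 for some i > 0, then 𝔠 is a free R-module and R is normal. -/

import Mathlib

open CategoryTheory IsLocalRing

set_option synthInstance.maxHeartbeats 1000000
set_option maxHeartbeats 1000000

noncomputable section

/-- The integral closure `R̄` of `R` in its total ring of fractions, viewed as a type
(with its canonical `R`-algebra and `R`-module structures). -/
abbrev IntClosure (R : Type) [CommRing R] : Type :=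
  ↥(integralClosure R (FractionRing R))

/-- The quotient `R`-module `R̄/R`. -/
abbrev IntClosureQuot (R : Type) [CommRing R] : Type :=
  IntClosure R ⧸ LinearMap.range (Algebra.linearMap R (IntClosure R))

/-- The conductor ideal `𝔠 = Ann_R(R̄/R) = {r : R | r • R̄ ⊆ R}`. -/
def conductorIdeal (R : Type) [CommRing R] : Ideal R :=
  Module.annihilator R (IntClosureQuot R)

/-- A local ring `R` is analytically unramified if its `m`-adic completion is reduced. -/
def AnalyticallyUnramified (R : Type) [CommRing R] [IsLocalRing R] : Prop :=
  IsReduced (AdicCompletion (maximalIdeal R) R)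

/-- `R` is normal: it is reduced and equal to its integral closure `R̄` in its total
ring of fractions. -/
def IsNormalRing (R : Type) [CommRing R] : Prop :=
  IsReduced R ∧ integralClosure R (FractionRing R) = ⊥

/-- `Ext^i_R(M, N)` as a type. -/
abbrev ExtMod (R : Type) [CommRing R] (M : Type) [AddCommGroup M] [Module R M]
    (N : Type) [AddCommGroup N] [Module R N] (i : ℕ) : Type :=
  ↥(((Ext R (ModuleCat.{0} R) i).obj (Opposite.op (ModuleCat.of R M))).obj (ModuleCat.of R N))

/-- `M` has finite projective dimension over `R`:
`Ext^i_R(M, -)` vanishes for all `i` bigger than some `n`. -/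
def HasFiniteProjDim (R : Type) [CommRing R] (M : Type) [AddCommGroup M] [Module R M] : Prop :=
  ∃ n : ℕ, ∀ (N : ModuleCat.{0} R) (i : ℕ), n < i →
    Subsingleton ↥(((Ext R (ModuleCat.{0} R) i).obj (Opposite.op (ModuleCat.of R M))).obj N)

/-- `M` has finite injective dimension over `R`:
`Ext^i_R(-, M)` vanishes for all `i` bigger than some `n`. -/
def HasFiniteInjDim (R : Type) [CommRing R] (M : Type) [AddCommGroup M] [Module R M] : Prop :=
  ∃ n : ℕ, ∀ (N : ModuleCat.{0} R) (i : ℕ), n < i →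
    Subsingleton ↥(((Ext R (ModuleCat.{0} R) i).obj (Opposite.op N)).obj (ModuleCat.of R M))

/-- The depth of an `R`-module `M` over a local ring `(R, m)`: the least `i` such that
`Ext^i_R(R/m, M) ≠ 0` (`⊤` if there is no such `i`), valued in `WithBot (WithTop ℕ)`
for easy comparison with `ringKrullDim`. -/
def moduleDepth (R : Type) [CommRing R] [IsLocalRing R]
    (M : Type) [AddCommGroup M] [Module R M] : WithBot (WithTop ℕ) :=
  sInf { n : WithBot (WithTop ℕ) |
    ∃ i : ℕ, n = (i : ℕ) ∧ Nontrivial (ExtMod R (ResidueField R) M i) }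

/-- A Noetherian local ring is Gorenstein if it has finite injective dimension
as a module over itself. -/
def IsGorensteinLocal (R : Type) [CommRing R] [IsLocalRing R] : Prop :=
  IsNoetherianRing R ∧ HasFiniteInjDim R R

/-- A Noetherian local ring is Cohen–Macaulay if its depth equals its Krull dimension. -/
def IsCohenMacaulayLocal (R : Type) [CommRing R] [IsLocalRing R] : Prop :=
  IsNoetherianRing R ∧ moduleDepth R R = ringKrullDim R

/-- A ring is Cohen–Macaulay if it is Noetherian and all its localizations at primes
are Cohen–Macaulay local rings. -/
def IsCohenMacaulayRing (A : Type) [CommRing A] : Prop :=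
  IsNoetherianRing A ∧ ∀ (p : Ideal A) [p.IsPrime],
    moduleDepth (Localization.AtPrime p) (Localization.AtPrime p) =
      ringKrullDim (Localization.AtPrime p)

/-- Serre's condition `(S2)`: `depth (R_p) ≥ min {2, height p}` for every prime `p`
(`height p` being the dimension of `R_p`). -/
def SerreS2 (R : Type) [CommRing R] : Prop :=
  ∀ (p : Ideal R) [p.IsPrime],
    min 2 (ringKrullDim (Localization.AtPrime p)) ≤
      moduleDepth (Localization.AtPrime p) (Localization.AtPrime p)

/-- A Noetherian local ring is regular if its maximal ideal can be generated by
`dim R` elements. -/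
def IsRegularLocal (A : Type) [CommRing A] [IsLocalRing A] : Prop :=
  IsNoetherianRing A ∧ ∃ s : Finset A, Ideal.span (s : Set A) = maximalIdeal A ∧
    (s.card : WithBot (WithTop ℕ)) = ringKrullDim A

/-- Serre's condition `(R1)`: `R_p` is regular for every prime `p` of height at most `1`. -/
def SerreR1 (R : Type) [CommRing R] : Prop :=
  ∀ (p : Ideal R) [p.IsPrime], ringKrullDim (Localization.AtPrime p) ≤ 1 →
    IsRegularLocal (Localization.AtPrime p)

/-- The `i`-th local cohomology `H^i_m(M)` of `M` with support in the maximal ideal,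
as a type. -/
abbrev localCohMod (R : Type) [CommRing R] [IsLocalRing R] (i : ℕ)
    (M : Type) [AddCommGroup M] [Module R M] : Type :=
  ↥((localCohomology (maximalIdeal R) i).obj (ModuleCat.of R M))

/-- `x : Fin d → R` is a system of parameters for the local ring `(R, m)`:
`d = dim R`, all `x i` lie in `m`, and the ideal they generate is `m`-primary
(its radical is `m`). -/
def IsSystemOfParameters (R : Type) [CommRing R] [IsLocalRing R] {d : ℕ}
    (x : Fin d → R) : Prop :=
  (d : WithBot (WithTop ℕ)) = ringKrullDim R ∧ (∀ i, x i ∈ maximalIdeal R) ∧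
    (Ideal.span (Set.range x)).radical = maximalIdeal R

/-- `E` is an injective hull of the residue field of the local ring `R`:
`E` is injective and contains a copy of `R/m` as an essential submodule. -/
def IsInjectiveHullOfResidueField (R : Type) [CommRing R] [IsLocalRing R]
    (E : Type) [AddCommGroup E] [Module R E] : Prop :=
  Module.Injective R E ∧ ∃ f : ResidueField R →ₗ[R] E, Function.Injective f ∧
    ∀ N : Submodule R E, N ≠ ⊥ → N ⊓ LinearMap.range f ≠ ⊥


theorem zz_precomplete_pi {A : Type} [CommRing A] (I : Ideal A) [IsPrecomplete I A] (n : ℕ) :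
    IsPrecomplete I (Fin n → A) := by
  rw [← AdicCompletion.of_surjective_iff]
  intro x
  choose r hr using fun j => AdicCompletion.of_surjective I A (AdicCompletion.piEquivFin I n x j)
  refine ⟨r, (AdicCompletion.piEquivFin I n).injective ?_⟩
  funext j
  rw [← hr j, AdicCompletion.piEquivFin_apply]
  exact AdicCompletion.map_of I (LinearMap.proj j : (Fin n → A) →ₗ[A] A) r

theorem zz_finite_of_complete {A : Type} [CommRing A] (I : Ideal A) [IsPrecomplete I A]
    (M : Type) [AddCommGroup M] [Module A M] [IsHausdorff I M]
    [h : Module.Finite A (M ⧸ (I • ⊤ : Submodule A M))] : Module.Finite A M := by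
  obtain ⟨n, f, hf⟩ := Module.Finite.exists_fin' A (M ⧸ (I • ⊤ : Submodule A M))
  obtain ⟨g, hg⟩ := Module.projective_lifting_property (Submodule.mkQ (I • ⊤ : Submodule A M)) f
    (Submodule.mkQ_surjective _)
  have := zz_precomplete_pi I n
  have : Function.Surjective g := surjective_of_mkQ_comp_surjective (I := I) (by rw [hg]; exact hf)
  exact Module.Finite.of_surjective g this

/-- for x in I, D I-complete implies D x-complete -/
theorem zz_complete_of_mem {D : Type} [CommRing D] (I : Ideal D) [hI : IsAdicComplete I D] (x : D)
    (hx : x ∈ I) : IsAdicComplete (Ideal.span {x}) D := by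
  have hle : ∀ n, (Ideal.span {x} : Ideal D) ^ n ≤ I ^ n := fun n =>
    Ideal.pow_right_mono ((Ideal.span_singleton_le_iff_mem I).2 hx) n
  refine { haus' := ?_, prec' := ?_ }
  · intro y hy
    refine IsHausdorff.haus hI.toIsHausdorff y fun n => ?_
    have := hy n
    rw [SModEq.zero] at this ⊢
    simp only [smul_eq_mul, Ideal.mul_top] at this ⊢
    exact hle n this
  · intro f hf
    have h1 : ∀ n, ∃ c, f (n+1) = f n + x ^ n * c := by
      intro n
      have := hf (Nat.le_succ n)
      rw [SModEq.sub_mem, smul_eq_mul, Ideal.mul_top, Ideal.span_singleton_pow,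
        Ideal.mem_span_singleton] at this
      obtain ⟨c, hc⟩ := this
      refine ⟨-c, ?_⟩
      have h2 : f (n+1) = f n - (f n - f (n+1)) := by ring
      rw [h2]; rw [show f n - f (n+1) = x^n*c from hc]; ring
    choose c hc using h1
    -- limit of partial sums starting at n
    have h2 : ∀ n, ∃ L, ∀ k, (∑ i ∈ Finset.range k, c (n+i) * x ^ i) - L ∈ I ^ k := by
      intro n
      obtain ⟨L, hL⟩ := IsPrecomplete.prec hI.toIsPrecomplete
        (f := fun k => ∑ i ∈ Finset.range k, c (n+i) * x ^ i) (by
          intro a b hab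
          rw [SModEq.sub_mem, smul_eq_mul, Ideal.mul_top]
          rw [← neg_mem_iff, neg_sub, Finset.sum_range_sub_sum_range hab]
          refine Ideal.sum_mem _ fun i hi => ?_
          simp only [Finset.mem_filter, Finset.mem_range] at hi
          exact Ideal.mul_mem_left _ _ (Ideal.pow_le_pow_right hi.2 (Ideal.pow_mem_pow hx i)))
      refine ⟨L, fun k => ?_⟩
      have := hL k
      rwa [SModEq.sub_mem, smul_eq_mul, Ideal.mul_top] at this
    choose L hL using h2
    have key : ∀ n k, f (n+k) = f n + x^n * ∑ i ∈ Finset.range k, c (n+i) * x ^ i := by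
      intro n k
      induction k with
      | zero => simp
      | succ k ih =>
        rw [← add_assoc, hc, ih, Finset.sum_range_succ]; ring
    have h3 : ∀ n, f n + x^n * L n = f 0 + L 0 := by
      intro n
      rw [← sub_eq_zero]
      refine IsHausdorff.haus hI.toIsHausdorff _ fun k => ?_
      rw [SModEq.zero, smul_eq_mul, Ideal.mul_top]
      have e1 := key 0 (n+k)
      have e2 := key n k
      have e3 := Ideal.pow_le_pow_right (Nat.le_add_left k n) (hL 0 (n+k))
      have e4 := Ideal.mul_mem_left _ (x^n) (hL n k)
      have := Ideal.sub_mem _ e3 e4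
      convert this using 1
      rw [zero_add] at e1
      rw [e2] at e1
      simp only [pow_zero, one_mul, zero_add] at e1 ⊢
      linear_combination e1
    refine ⟨f 0 + L 0, fun n => ?_⟩
    rw [SModEq.sub_mem, smul_eq_mul, Ideal.mul_top, Ideal.span_singleton_pow,
        Ideal.mem_span_singleton, ← h3 n]
    exact ⟨- L n, by ring⟩

theorem zz_trunc_mul {A : Type} [CommRing A] (n : ℕ) (f g : PowerSeries A) :
    (Polynomial.X : Polynomial A) ^ n ∣
      (PowerSeries.trunc n (f * g) - PowerSeries.trunc n f * PowerSeries.trunc n g) := by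
  rw [Polynomial.X_pow_dvd_iff]
  intro d hd
  rw [Polynomial.coeff_sub, PowerSeries.coeff_trunc, if_pos hd, PowerSeries.coeff_mul,
    Polynomial.coeff_mul, sub_eq_zero]
  refine Finset.sum_congr rfl fun p hp => ?_
  have := Finset.HasAntidiagonal.mem_antidiagonal.1 hp
  rw [PowerSeries.coeff_trunc, PowerSeries.coeff_trunc, if_pos (by omega), if_pos (by omega)]

noncomputable def zzEvalMod {A D : Type} [CommRing A] [CommRing D] (φ : A →+* D) (x : D) (n : ℕ) :
    PowerSeries A →+* D ⧸ (Ideal.span {x} : Ideal D) ^ n :=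
  RingHom.mk' (⟨⟨fun f => Ideal.Quotient.mk _ (Polynomial.eval₂ φ x (PowerSeries.trunc n f)), by
      rcases n with _ | n
      · have : Subsingleton (D ⧸ (Ideal.span {x} : Ideal D) ^ 0) := by
          rw [pow_zero, Ideal.one_eq_top]; exact Ideal.Quotient.subsingleton_iff.2 rfl
        exact Subsingleton.elim _ _
      · simp [PowerSeries.trunc_one]⟩, by
      intro f g
      change Ideal.Quotient.mk _ _ = Ideal.Quotient.mk _ _ * Ideal.Quotient.mk _ _
      rw [← map_mul, Ideal.Quotient.eq, ← Polynomial.eval₂_mul, ← Polynomial.eval₂_sub,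
        Ideal.span_singleton_pow, Ideal.mem_span_singleton]
      obtain ⟨q, hq⟩ := zz_trunc_mul n f g
      rw [hq, Polynomial.eval₂_mul]; simp⟩) (by
      intro f g
      change Ideal.Quotient.mk _ _ = Ideal.Quotient.mk _ _ + Ideal.Quotient.mk _ _
      rw [← map_add, ← Polynomial.eval₂_add, map_add])

theorem zzEvalMod_apply {A D : Type} [CommRing A] [CommRing D] (φ : A →+* D) (x : D) (n : ℕ)
    (f : PowerSeries A) : zzEvalMod φ x n f =
      Ideal.Quotient.mk _ (Polynomial.eval₂ φ x (PowerSeries.trunc n f)) := rfl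

theorem zz_trunc_dvd {A : Type} [CommRing A] {m n : ℕ} (h : m ≤ n) (f : PowerSeries A) :
    (Polynomial.X : Polynomial A) ^ m ∣ (PowerSeries.trunc n f - PowerSeries.trunc m f) := by
  rw [Polynomial.X_pow_dvd_iff]
  intro d hd
  rw [Polynomial.coeff_sub, PowerSeries.coeff_trunc, PowerSeries.coeff_trunc, if_pos (by omega),
    if_pos hd, sub_self]

theorem zz_powerSeries_lift {A D : Type} [CommRing A] [CommRing D] (φ : A →+* D) (x : D)
    [IsAdicComplete (Ideal.span {x}) D] :
    ∃ ψ : PowerSeries A →+* D, ψ.comp PowerSeries.C = φ ∧ ψ PowerSeries.X = x := by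
  have hf : ∀ {m n : ℕ} (hle : m ≤ n), (Ideal.Quotient.factorPow (Ideal.span {x}) hle).comp
      (zzEvalMod φ x n) = zzEvalMod φ x m := by
    intro m n hle
    ext f
    rw [RingHom.comp_apply, zzEvalMod_apply, zzEvalMod_apply]
    change Ideal.Quotient.mk _ _ = _
    rw [Ideal.Quotient.eq, ← Polynomial.eval₂_sub, Ideal.span_singleton_pow,
      Ideal.mem_span_singleton]
    obtain ⟨q, hq⟩ := zz_trunc_dvd hle f
    rw [hq, Polynomial.eval₂_mul]; simp
  let ψ := IsAdicComplete.liftRingHom (Ideal.span {x}) (fun n => zzEvalMod φ x n) hf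
  have hψ : ∀ n f, Ideal.Quotient.mk ((Ideal.span {x}) ^ n) (ψ f) = zzEvalMod φ x n f := fun n f =>
    IsAdicComplete.mk_liftRingHom _ _ hf n f
  have hz : ∀ y : D, (∀ n, y ∈ (Ideal.span {x} : Ideal D) ^ n) → y = 0 := fun y hy =>
    IsHausdorff.haus (I := Ideal.span {x}) inferInstance y fun n => by
      rw [SModEq.zero, smul_eq_mul, Ideal.mul_top]; exact hy n
  refine ⟨ψ, ?_, ?_⟩
  · ext a
    rw [RingHom.comp_apply, ← sub_eq_zero]
    refine hz _ fun n => ?_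
    rcases n with _ | n
    · simp
    rw [← Ideal.Quotient.eq, hψ, zzEvalMod_apply]
    simp [PowerSeries.trunc_C]
  · rw [← sub_eq_zero]
    refine hz _ fun n => ?_
    suffices h : ψ PowerSeries.X - x ∈ (Ideal.span {x} : Ideal D) ^ (n+2) from
      Ideal.pow_le_pow_right (by omega) h
    rw [← Ideal.Quotient.eq, hψ, zzEvalMod_apply]
    simp [PowerSeries.trunc_X]


theorem zz_normal_step {R : Type} [CommRing R] [IsDomain R] [IsNoetherianRing R] {u : R}
    (hu : Prime u) (hic : ∀ [IsDomain (R ⧸ Ideal.span {u})], IsIntegrallyClosed (R ⧸ Ideal.span {u}))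
    {a b d : R} (hb : ¬ u ∣ b) (hd : ¬ u ∣ d) (h : ∀ n, b ^ n ∣ d * a ^ n) :
    ∃ c a₁, a = b * c + u * a₁ ∧ ∀ n, b ^ n ∣ d * a₁ ^ n := by
  have hp : (Ideal.span {u}).IsPrime := (Ideal.span_singleton_prime hu.ne_zero).2 hu
  have hdom : IsDomain (R ⧸ Ideal.span {u}) := Ideal.Quotient.isDomain _
  have hic' := @hic hdom
  let Q := R ⧸ Ideal.span {u}
  let K := FractionRing Q
  let q : R →+* Q := Ideal.Quotient.mk _
  have hq : ∀ r, q r = 0 ↔ u ∣ r := fun r => by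
    rw [Ideal.Quotient.eq_zero_iff_mem, Ideal.mem_span_singleton]
  have hqb : q b ≠ 0 := fun h => hb ((hq b).1 h)
  have hqd : q d ≠ 0 := fun h => hd ((hq d).1 h)
  have hKb : algebraMap Q K (q b) ≠ 0 := fun h => hqb ((IsFractionRing.injective Q K) (by simpa using h))
  have hal : IsAlmostIntegral Q (algebraMap Q K (q a) / algebraMap Q K (q b)) := by
    refine ⟨q d, mem_nonZeroDivisors_of_ne_zero hqd, fun n => ?_⟩
    obtain ⟨r, hr⟩ := h n
    refine ⟨q r, ?_⟩
    rw [Algebra.smul_def, div_pow, mul_div_assoc', eq_div_iff (pow_ne_zero _ hKb)]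
    rw [← map_pow, ← map_pow, ← map_mul, ← map_mul, ← map_pow, ← map_pow, ← map_mul, ← map_mul, hr,
      mul_comm]
  obtain ⟨y, hy⟩ := IsIntegrallyClosed.algebraMap_eq_of_integral hal.isIntegral
  obtain ⟨c, rfl⟩ := Ideal.Quotient.mk_surjective y
  rw [eq_div_iff hKb, ← map_mul] at hy
  have hy' : q (c * b) = q a := by rw [map_mul]; exact IsFractionRing.injective Q K hy
  have : u ∣ a - c * b := by rw [← hq, map_sub, hy', sub_self]
  obtain ⟨a₁, ha₁⟩ := this
  refine ⟨c, a₁, by rw [← ha₁]; ring, fun n => ?_⟩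
  have h1 : b ^ n ∣ d * (a - c * b) ^ n := by
    rw [sub_eq_add_neg, add_pow, Finset.mul_sum]
    refine Finset.dvd_sum fun i hi => ?_
    have hi' : i ≤ n := by simpa [Nat.lt_succ_iff] using hi
    obtain ⟨r, hr⟩ := h i
    have : b ^ n = b ^ i * b ^ (n - i) := by rw [← pow_add]; congr 1; omega
    rw [this]
    refine ⟨r * (-c) ^ (n-i) * (n.choose i), ?_⟩
    have e : (-(c*b)) ^ (n-i) = (-c)^(n-i) * b^(n-i) := by rw [← mul_pow]; ring
    rw [e]
    linear_combination ((-c)^(n-i) * b^(n-i) * (n.choose i)) * hr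
  rw [ha₁, mul_pow] at h1
  obtain ⟨r, hr⟩ := h1
  have h2 : u ^ n ∣ b ^ n * r := ⟨d * a₁^n, by rw [← hr]; ring⟩
  have h3 := Prime.pow_dvd_of_dvd_mul_left hu n (fun h => hb (hu.dvd_of_dvd_pow h)) h2
  obtain ⟨s, rfl⟩ := h3
  refine ⟨s, mul_left_cancel₀ (pow_ne_zero n hu.ne_zero) ?_⟩
  linear_combination hr

theorem zz_normal_of_quot {R : Type} [CommRing R] [IsDomain R] [IsNoetherianRing R] {u : R}
    (hu : Prime u) (hj : Ideal.span {u} ≤ (⊥ : Ideal R).jacobson)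
    (hic : ∀ [IsDomain (R ⧸ Ideal.span {u})], IsIntegrallyClosed (R ⧸ Ideal.span {u})) :
    IsIntegrallyClosed R := by
  rw [isIntegrallyClosed_iff (FractionRing R)]
  intro y hy
  obtain ⟨d, hd, hdy⟩ := hy.isAlmostIntegral
  have hd0 : d ≠ 0 := nonZeroDivisors.ne_zero hd
  obtain ⟨f, d', hd', rfl⟩ := WfDvdMonoid.max_power_factor hd0 hu.irreducible
  -- numerator/denominator
  obtain ⟨a0, b0, hb0, rfl⟩ := IsFractionRing.div_surjective (A := R) y
  have hb0' : b0 ≠ 0 := nonZeroDivisors.ne_zero hb0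
  have hinj := IsFractionRing.injective R (FractionRing R)
  have key : ∀ n, b0 ^ n ∣ u ^ f * d' * a0 ^ n := by
    intro n
    obtain ⟨r, hr⟩ := hdy n
    rw [Algebra.smul_def, div_pow, mul_div_assoc', eq_div_iff
      (pow_ne_zero _ (fun h => hb0' (hinj (by simpa using h))))] at hr
    rw [← map_pow, ← map_pow, ← map_mul, ← map_mul] at hr
    exact ⟨r, by rw [← hinj hr]; ring⟩
  suffices h : b0 ∣ a0 by
    obtain ⟨c, rfl⟩ := h
    refine ⟨c, ?_⟩
    rw [eq_div_iff (fun h => hb0' (hinj (by simpa using h))), ← map_mul, mul_comm]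
  by_cases ha0 : a0 = 0
  · simp [ha0]
  obtain ⟨e, b, hb, rfl⟩ := WfDvdMonoid.max_power_factor hb0' hu.irreducible
  obtain ⟨g, a, ha, rfl⟩ := WfDvdMonoid.max_power_factor ha0 hu.irreducible
  -- e ≤ g
  have heg : e ≤ g := by
    by_contra hlt
    have := key (f+1)
    have h1 : u ^ ((g+1)*(f+1)) ∣ u ^ (f + g * (f+1)) * (d' * a ^ (f+1)) := by
      refine (Dvd.dvd.trans ?_ this).trans (dvd_of_eq ?_)
      · rw [mul_pow, ← pow_mul]
        exact Dvd.dvd.mul_right (pow_dvd_pow _ (Nat.mul_le_mul_right _ (by omega))) _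
      · rw [mul_pow, pow_add, ← pow_mul]; ring
    have h2 : (g+1)*(f+1) = (f + g*(f+1)) + 1 := by ring
    rw [h2, pow_add, pow_one] at h1
    have h3 := (mul_dvd_mul_iff_left (pow_ne_zero _ hu.ne_zero)).1 h1
    rcases hu.dvd_or_dvd h3 with h | h
    · exact hd' h
    · exact ha (hu.dvd_of_dvd_pow h)
  obtain ⟨g, rfl⟩ := Nat.exists_eq_add_of_le heg
  have hk : ∀ n, b ^ n ∣ d' * (u ^ g * a) ^ n := by
    intro n
    obtain ⟨r, hr⟩ := key n
    have hr2 : u ^ f * (d' * (u^g * a)^n) = b ^ n * r := by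
      refine mul_left_cancel₀ (pow_ne_zero (e*n) hu.ne_zero) ?_
      rw [pow_mul]
      calc _ = u ^ f * d' * (u^(e+g) * a)^n := by rw [pow_add]; simp only [mul_pow]; ring
        _ = _ := by rw [hr]; simp only [mul_pow]; ring
    have h2 : u ^ f ∣ b ^ n * r := ⟨_, hr2.symm⟩
    have h3 := Prime.pow_dvd_of_dvd_mul_left hu f (fun h => hb (hu.dvd_of_dvd_pow h)) h2
    obtain ⟨s, rfl⟩ := h3
    exact ⟨s, mul_left_cancel₀ (pow_ne_zero f hu.ne_zero) (by linear_combination hr2)⟩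
  suffices h : b ∣ u ^ g * a by
    rw [pow_add, mul_assoc]; exact mul_dvd_mul_left _ h
  generalize u ^ g * a = a' at hk
  have hN : ∀ N, ∃ c a₁, a' = b * c + u ^ N * a₁ ∧ ∀ n, b ^ n ∣ d' * a₁ ^ n := by
    intro N
    induction N with
    | zero => exact ⟨0, a', by simp, hk⟩
    | succ N ih =>
      obtain ⟨c, a₁, h1, h2⟩ := ih
      obtain ⟨c', a₂, h3, h4⟩ := zz_normal_step hu hic hb hd' h2
      exact ⟨c + u^N * c', a₂, by rw [h1, h3]; ring, h4⟩
  have hH : IsHausdorff (Ideal.span {u}) (R ⧸ Ideal.span {b}) := IsHausdorff.of_le_jacobson _ _ hj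
  rw [← Ideal.mem_span_singleton, ← Ideal.Quotient.eq_zero_iff_mem]
  refine hH.haus _ fun N => ?_
  rw [SModEq.zero]
  obtain ⟨c, a₁, h1, -⟩ := hN N
  have : (Ideal.Quotient.mk (Ideal.span {b})) a' =
      u ^ N • (Ideal.Quotient.mk (Ideal.span {b})) a₁ := by
    rw [h1, Algebra.smul_def, map_add, map_mul, map_mul, Ideal.Quotient.mk_singleton_self]; simp
  rw [this]
  exact Submodule.smul_mem_smul (Ideal.pow_mem_pow (Ideal.mem_span_singleton_self u) N) trivial

theorem zz_quotX {A : Type} [CommRing A] : Nonempty ((PowerSeries A ⧸ Ideal.span {(PowerSeries.X : PowerSeries A)}) ≃+* A) := by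
  have h : RingHom.ker (PowerSeries.constantCoeff (R := A)) = Ideal.span {PowerSeries.X} := by
    ext f
    rw [RingHom.mem_ker, Ideal.mem_span_singleton, PowerSeries.X_dvd_iff]
  refine ⟨(Ideal.quotEquivOfEq h.symm).trans (RingHom.quotientKerEquivOfSurjective ?_)⟩
  exact PowerSeries.constantCoeff_surj

theorem zz_normal_powerSeries {A : Type} [CommRing A] [IsDomain A] [IsNoetherianRing A]
    [IsIntegrallyClosed A] : IsIntegrallyClosed (PowerSeries A) := by
  refine zz_normal_of_quot PowerSeries.X_prime (IsAdicComplete.le_jacobson_bot _) ?_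
  intro _
  obtain ⟨e⟩ := zz_quotX (A := A)
  exact IsIntegrallyClosed.of_equiv e.symm


theorem zz_dvr_quot_finite (O : Type) [CommRing O] [IsDomain O] [IsDiscreteValuationRing O]
    (K : Type) [Field K] [Algebra O K] [IsFractionRing O K]
    (L : Type) [Field L] [Algebra O L] [Algebra K L] [IsScalarTower O K L] [FiniteDimensional K L] :
    Module.Finite O (integralClosure O L ⧸ (maximalIdeal O).map (algebraMap O (integralClosure O L))) := by
  classical
  set B := integralClosure O L
  set p := maximalIdeal O
  letI : Field (O ⧸ p) := Ideal.Quotient.field p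
  have hli : ∀ (ι : Type) (b : ι → B), LinearIndependent (O ⧸ p) (fun i => (Ideal.Quotient.mk (p.map (algebraMap O B)) (b i))) → LinearIndependent K (fun i => (b i : L)) := by
    intro ι b hb
    refine Ideal.FinrankQuotientMap.linearIndependent_of_nontrivial (S := O ⧸ p) K ?_
        ((B.val.toLinearMap)) Subtype.val_injective ((Submodule.mkQ (p.map (algebraMap O B))).restrictScalars O) hb
    rw [Ideal.Quotient.algebraMap_eq, Ideal.mk_ker]
    exact Ideal.IsMaximal.ne_top inferInstance
  have hfd : FiniteDimensional (O ⧸ p) (B ⧸ p.map (algebraMap O B)) := by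
    have : Module.rank (O ⧸ p) (B ⧸ p.map (algebraMap O B)) ≤ (Module.finrank K L : ℕ) := by
      apply rank_le
      intro s hs
      choose b hb using fun x : s => Ideal.Quotient.mk_surjective x.1
      have h2 := hli s b (by
        convert hs with x
        exact hb x)
      have := h2.fintype_card_le_finrank
      simpa using this
    exact Module.rank_lt_aleph0_iff.mp (this.trans_lt (Cardinal.natCast_lt_aleph0))
  exact Module.Finite.trans (O ⧸ p) _

theorem zz_dvr_pid (O : Type) [CommRing O] [IsDomain O] [IsDiscreteValuationRing O]
    (K : Type) [Field K] [Algebra O K] [IsFractionRing O K]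
    (L : Type) [Field L] [Algebra O L] [Algebra K L] [IsScalarTower O K L] [FiniteDimensional K L] :
    IsPrincipalIdealRing (integralClosure O L) := by
  classical
  set B := integralClosure O L
  set p := maximalIdeal O
  have hinj : Function.Injective (algebraMap O B) := by
    have h : Function.Injective (algebraMap O L) := by
      rw [IsScalarTower.algebraMap_eq O K L]
      exact (algebraMap K L).injective.comp (IsFractionRing.injective O K)
    intro a b hab
    exact h (congrArg Subtype.val hab)
  have hfin := zz_dvr_quot_finite O K L
  have key : ∀ P : Ideal B, P.IsPrime → P ≠ ⊥ → p.map (algebraMap O B) ≤ P := by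
    intro P hP hne
    rw [Ideal.map_le_iff_le_comap]
    have h1 : P.comap (algebraMap O B) ≠ ⊥ := Ideal.IsIntegral.comap_ne_bot _ hne
    have h2 : (P.comap (algebraMap O B)).IsPrime := hP.comap _
    have h3 := h2.isMaximal h1
    rw [IsLocalRing.eq_maximalIdeal h3]
  have hnoeth : IsNoetherianRing B := by
    apply IsNoetherianRing.of_prime_ne_bot
    intro P hP hne
    have hle := key P hP hne
    have : IsNoetherian O (B ⧸ p.map (algebraMap O B)) := inferInstance
    have hN : IsNoetherian B (B ⧸ p.map (algebraMap O B)) := isNoetherian_of_tower O this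
    refine Submodule.fg_of_fg_map_of_fg_inf_ker (p.map (algebraMap O B)).mkQ (hN.noetherian _) ?_
    rw [Submodule.ker_mkQ, inf_eq_right.mpr hle]
    exact Ideal.FG.map (IsNoetherian.noetherian p) _
  have hic : IsIntegrallyClosed B := integralClosure.isIntegrallyClosedOfFiniteExtension K
  have hdd : IsDedekindDomain B := {}
  apply IsPrincipalIdealRing.of_finite_primes
  have hfm := Ideal.finite_minimalPrimes_of_isNoetherianRing B (p.map (algebraMap O B))
  refine (hfm.union (Set.finite_singleton ⊥)).subset ?_
  intro P hP
  have hP : P.IsPrime := hP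
  by_cases hne : P = ⊥
  · right; exact hne
  left
  refine ⟨⟨hP, key P hP hne⟩, ?_⟩
  rintro Q ⟨hQ, hQle⟩ hQP
  have hQne : Q ≠ ⊥ := by
    rintro rfl
    have : p = ⊥ := by
      rw [eq_bot_iff]
      intro x hx
      have := hQle (Ideal.mem_map_of_mem _ hx)
      rw [Ideal.mem_bot] at this
      exact (map_eq_zero_iff _ hinj).mp this
    exact IsDiscreteValuationRing.not_a_field O this
  have := (hQ.isMaximal hQne).eq_of_le hP.ne_top hQP
  exact this.ge


/-- finiteness of integral closure in finite field extensions -/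
def zzN2 (A : Type) [CommRing A] [IsDomain A] : Prop :=
  ∀ (L : Type) [Field L] [Algebra A L] [Algebra (FractionRing A) L]
    [IsScalarTower A (FractionRing A) L] [FiniteDimensional (FractionRing A) L],
    Module.Finite A (integralClosure A L)

theorem zz_dvr_loc (A : Type) [CommRing A] [IsDomain A] [IsNoetherianRing A]
    (u : A) (hu : Prime u) [(Ideal.span {u}).IsPrime] (O : Type) [CommRing O] [IsDomain O] [Algebra A O]
    [IsLocalization.AtPrime O (Ideal.span {u})] : IsDiscreteValuationRing O := by
  have hloc : IsLocalRing O := IsLocalization.AtPrime.isLocalRing O (Ideal.span {u})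
  have hn : IsNoetherianRing O := IsLocalization.isNoetherianRing (Ideal.span {u}).primeCompl O inferInstance
  have hm : maximalIdeal O = Ideal.span {algebraMap A O u} := by
    rw [← IsLocalization.AtPrime.map_eq_maximalIdeal (Ideal.span {u}) O, Ideal.map_span, Set.image_singleton]
  have hinj : Function.Injective (algebraMap A O) :=
    IsLocalization.injective O (Ideal.span {u}).primeCompl_le_nonZeroDivisors
  have hnf : ¬ IsField O := by
    intro h
    have := IsLocalRing.isField_iff_maximalIdeal_eq.mp h
    rw [hm, Ideal.span_singleton_eq_bot] at this
    exact hu.ne_zero ((map_eq_zero_iff _ hinj).mp this)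
  exact ((IsDiscreteValuationRing.TFAE O hnf).out 4 0 rfl rfl).mp ⟨⟨_, hm⟩⟩

theorem zz_F3 (A : Type) [CommRing A] [IsDomain A] [IsIntegrallyClosed A]
    (u : A) (hu : Prime u) [(Ideal.span {u}).IsPrime] (O : Type) [CommRing O] [IsDomain O] [IsIntegrallyClosed O]
    [Algebra A O] [IsLocalization.AtPrime O (Ideal.span {u})]
    (K : Type) [Field K] [Algebra A K] [IsFractionRing A K] [Algebra O K] [IsFractionRing O K]
    [IsScalarTower A O K]
    (L : Type) [Field L] [Algebra A L] [Algebra K L] [IsScalarTower A K L]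
    [Algebra O L] [IsScalarTower O K L] (y : L) (hy : IsIntegral O y)
    (huy : IsIntegral A (u • y)) : IsIntegral A y := by
  have hinj : Function.Injective (algebraMap A K) := IsFractionRing.injective A K
  have h1 := minpoly.isIntegrallyClosed_eq_field_fractions' K hy
  have h2 := minpoly.isIntegrallyClosed_eq_field_fractions' K huy
  have huK : algebraMap A K u ≠ 0 := fun h => hu.ne_zero ((map_eq_zero_iff _ hinj).mp h)
  have h3 : minpoly K (algebraMap A K u • y) = (minpoly K y).scaleRoots (algebraMap A K u) :=
    IsIntegrallyClosed.minpoly_smul huK hy.tower_top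
  rw [algebraMap_smul, h2] at h3
  have hlift : minpoly K y ∈ Polynomial.lifts (algebraMap A K) := by
    rw [Polynomial.lifts_iff_coeff_lifts]
    intro n
    have h4 := congrArg (fun q => Polynomial.coeff q n) h3
    simp only [Polynomial.coeff_map, Polynomial.coeff_scaleRoots] at h4
    have h5 : (minpoly K y).coeff n = algebraMap O K ((minpoly O y).coeff n) := by
      rw [h1, Polynomial.coeff_map]
    obtain ⟨⟨a, s⟩, has⟩ := IsLocalization.surj (Ideal.span {u}).primeCompl ((minpoly O y).coeff n)
    simp only at has
    generalize (minpoly K y).natDegree - n = k at h4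
    generalize (minpoly A (u • y)).coeff n = a' at h4
    set c := (minpoly K y).coeff n
    have h6 : c * algebraMap A K s = algebraMap A K a := by
      rw [h5, IsScalarTower.algebraMap_apply A O K, ← map_mul, has, ← IsScalarTower.algebraMap_apply]
    have h7 : u ^ k * a = a' * s := by
      apply hinj
      rw [map_mul, map_mul, h4, ← h6, map_pow]
      ring
    have h8 : u ^ k ∣ a' := by
      apply hu.pow_dvd_of_dvd_mul_right k (a := a') (b := s) _ ⟨a, h7.symm⟩
      intro hd
      exact s.2 (Ideal.mem_span_singleton.mpr hd)
    obtain ⟨d, rfl⟩ := h8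
    refine ⟨d, ?_⟩
    rw [map_mul, map_pow, mul_comm] at h4
    exact mul_right_cancel₀ (pow_ne_zero k huK) h4
  have hyK : IsIntegral K y := hy.tower_top
  obtain ⟨q, hq, -, hqm⟩ := Polynomial.lifts_and_natDegree_eq_and_monic hlift (minpoly.monic hyK)
  refine ⟨q, hqm, ?_⟩
  have := minpoly.aeval K y
  rw [← hq, Polynomial.aeval_map_algebraMap] at this
  exact this


theorem zz_N2_quot (A : Type) [CommRing A] 
    (u : A) [(Ideal.span {u}).IsPrime] (O : Type) [CommRing O] [Algebra A O]
    [IsLocalization.AtPrime O (Ideal.span {u})]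
    (hN : zzN2 (A ⧸ Ideal.span {u}))
    (F : Type) [Field F] [Algebra A F] [Algebra O F] [IsScalarTower A O F] [Module.Finite O F]
    (hu : algebraMap A F u = 0) : (integralClosure A F).toSubmodule.FG := by
  set Q := A ⧸ Ideal.span {u}
  let f : Q →+* F := Ideal.Quotient.lift (Ideal.span {u}) (algebraMap A F) (by
    intro a ha
    obtain ⟨c, rfl⟩ := Ideal.mem_span_singleton.mp ha
    rw [map_mul, hu, zero_mul])
  have hne : ∀ a : A, a ∉ Ideal.span {u} → algebraMap A F a ≠ 0 := by
    intro a ha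
    have : IsUnit (algebraMap A O a) := IsLocalization.map_units O (⟨a, ha⟩ : (Ideal.span {u}).primeCompl)
    rw [IsScalarTower.algebraMap_apply A O F]
    exact (this.map (algebraMap O F)).ne_zero
  have hf : Function.Injective f := by
    rw [injective_iff_map_eq_zero]
    intro a ha
    obtain ⟨a, rfl⟩ := Ideal.Quotient.mk_surjective a
    by_contra h
    exact hne a (fun h2 => h (Ideal.Quotient.eq_zero_iff_mem.mpr h2)) ha
  let _ : Algebra Q F := f.toAlgebra
  have hfA : ∀ a : A, algebraMap Q F (Ideal.Quotient.mk _ a) = algebraMap A F a := fun a => rfl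
  have t1 : IsScalarTower A Q F := IsScalarTower.of_algebraMap_eq (fun a => rfl)
  let g : FractionRing Q →+* F := IsFractionRing.lift hf
  let _ : Algebra (FractionRing Q) F := g.toAlgebra
  have t2 : IsScalarTower Q (FractionRing Q) F := IsScalarTower.of_algebraMap_eq (fun a => (IsFractionRing.lift_algebraMap hf a).symm)
  have hrange : ∀ o : O, ∃ z : FractionRing Q, algebraMap (FractionRing Q) F z = algebraMap O F o := by
    intro o
    obtain ⟨⟨a, s⟩, has⟩ := IsLocalization.surj (Ideal.span {u}).primeCompl o
    refine ⟨algebraMap Q _ (Ideal.Quotient.mk _ a) / algebraMap Q _ (Ideal.Quotient.mk _ s.1), ?_⟩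
    rw [map_div₀, ← IsScalarTower.algebraMap_apply, ← IsScalarTower.algebraMap_apply, hfA, hfA,
      div_eq_iff (hne s s.2), IsScalarTower.algebraMap_apply A O F, ← has,
      IsScalarTower.algebraMap_apply A O F, map_mul]
  have hfd : FiniteDimensional (FractionRing Q) F := by
    obtain ⟨S, hS⟩ := (inferInstance : Module.Finite O F)
    refine ⟨S, ?_⟩
    rw [eq_top_iff]
    intro x _
    have hx : x ∈ Submodule.span O (S : Set F) := by rw [hS]; trivial
    induction hx using Submodule.span_induction with
    | mem x h => exact Submodule.subset_span h
    | zero => exact zero_mem _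
    | add x y _ _ h1 h2 => exact add_mem (h1 trivial) (h2 trivial)
    | smul o x _ h =>
      obtain ⟨z, hz⟩ := hrange o
      have : o • x = z • x := by rw [Algebra.smul_def, Algebra.smul_def, hz]
      rw [this]
      exact Submodule.smul_mem _ _ (h trivial)
  have h1 : Module.Finite Q (integralClosure Q F) := hN F
  have h2 : (integralClosure Q F).toSubmodule.FG := Module.Finite.iff_fg.mp h1
  have h3 : (integralClosure A F).toSubmodule = (integralClosure Q F).toSubmodule.restrictScalars A := by
    ext x
    simp only [Subalgebra.mem_toSubmodule, Submodule.restrictScalars_mem, mem_integralClosure_iff]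
    constructor
    · intro h; exact h.tower_top
    · intro h
      exact isIntegral_trans (R := A) (A := Q) x h
  rw [h3]
  exact h2.restrictScalars_of_surjective Ideal.Quotient.mk_surjective

theorem zz_exists_fg {A M N : Type} [CommRing A] [AddCommGroup M] [AddCommGroup N] [Module A M] [Module A N]
    (φ : M →ₗ[A] N) (h : (LinearMap.range φ).FG) : ∃ P : Submodule A M, P.FG ∧ ∀ x, ∃ y ∈ P, x - y ∈ LinearMap.ker φ := by
  classical
  obtain ⟨S, hS⟩ := h
  have hm : ∀ x : S, ∃ y, φ y = x.1 := by
    intro x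
    have : x.1 ∈ LinearMap.range φ := by rw [← hS]; exact Submodule.subset_span x.2
    exact this
  choose g hg using hm
  refine ⟨Submodule.span A (Set.range g), Submodule.fg_span (Set.finite_range g), fun x => ?_⟩
  have hx : φ x ∈ (Submodule.span A (Set.range g)).map φ := by
    rw [Submodule.map_span, ← Set.range_comp]
    have : Set.range (φ ∘ g) = (S : Set N) := by
      ext z
      constructor
      · rintro ⟨w, rfl⟩
        simp [hg]
      · intro hz
        exact ⟨⟨z, hz⟩, by simp [hg]⟩
    rw [this, hS]
    exact ⟨x, rfl⟩
  obtain ⟨y, hy, hxy⟩ := hx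
  exact ⟨y, hy, by rw [LinearMap.mem_ker, map_sub, hxy, sub_self]⟩

theorem zz_T_aux (A : Type) [CommRing A] [IsDomain A] [IsNoetherianRing A] [IsIntegrallyClosed A]
    (u : A) (hu : Prime u) [IsAdicComplete (Ideal.span {u}) A] [(Ideal.span {u}).IsPrime]
    (hN : zzN2 (A ⧸ Ideal.span {u}))
    (O : Type) [CommRing O] [IsDomain O] [IsIntegrallyClosed O] [IsDiscreteValuationRing O]
    [Algebra A O] [IsLocalization.AtPrime O (Ideal.span {u})]
    (K : Type) [Field K] [Algebra A K] [IsFractionRing A K] [Algebra O K] [IsFractionRing O K]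
    [IsScalarTower A O K]
    (L : Type) [Field L] [Algebra A L] [Algebra K L] [IsScalarTower A K L] [FiniteDimensional K L]
    [Algebra O L] [IsScalarTower O K L] [IsScalarTower A O L] : Module.Finite A (integralClosure A L) := by
  classical
  set B := integralClosure A L with hB
  set B' := integralClosure O L with hB'
  have hpid : IsPrincipalIdealRing B' := zz_dvr_pid O K L
  have hfinq := zz_dvr_quot_finite O K L
  have hBB : ∀ b : L, b ∈ B → b ∈ B' := fun b hb => IsIntegral.tower_top hb
  have hF3 : ∀ y : L, y ∈ B' → u • y ∈ B → y ∈ B := fun y h1 h2 => zz_F3 A u hu O K L y h1 h2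
  have hF2 : ∀ y : L, y ∈ B' → ∃ a : A, a ∉ Ideal.span {u} ∧ a • y ∈ B := by
    intro y hy
    obtain ⟨⟨a, ha⟩, h⟩ := IsIntegral.exists_multiple_integral_of_isLocalization (Ideal.span {u}).primeCompl y hy
    exact ⟨a, ha, h⟩
  have hinjL : Function.Injective (algebraMap A L) := by
    rw [IsScalarTower.algebraMap_eq A K L]
    exact (algebraMap K L).injective.comp (IsFractionRing.injective A K)
  let uB : B' := algebraMap A B' u
  have huBL : (uB : L) = algebraMap A L u := rfl
  have huB0 : uB ≠ 0 := by
    intro h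
    have : (uB : L) = 0 := by rw [h]; rfl
    rw [huBL] at this
    exact hu.ne_zero ((map_eq_zero_iff _ hinjL).mp this)
  -- u is a nonunit in B'
  have hmap : (maximalIdeal O).map (algebraMap O B') = Ideal.span {uB} := by
    rw [← IsLocalization.AtPrime.map_eq_maximalIdeal (Ideal.span {u}) O, Ideal.map_span, Set.image_singleton,
      Ideal.map_span, Set.image_singleton, ← IsScalarTower.algebraMap_apply]
  have hunit : ∀ a : A, a ∉ Ideal.span {u} → IsUnit (algebraMap A O a) := fun a ha =>
    IsLocalization.map_units O (⟨a, ha⟩ : (Ideal.span {u}).primeCompl)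
  -- the submodules
  let S : B' → Submodule A L := fun g => 
    { carrier := {b | b ∈ B ∧ ∃ c : B', b = g * c}
      add_mem' := by
        rintro x y ⟨hx, c, hc⟩ ⟨hy, d, hd⟩
        exact ⟨add_mem hx hy, c + d, by rw [hc, hd]; push_cast; ring⟩
      zero_mem' := ⟨zero_mem _, 0, by simp⟩
      smul_mem' := by
        rintro a x ⟨hx, c, hc⟩
        refine ⟨B.smul_mem hx a, a • c, ?_⟩
        rw [hc]
        simp [Algebra.smul_def]
        ring }
  have step : ∀ h π : B', Prime π → h * π ∣ uB → ∃ N : Submodule A L, N.FG ∧ N ≤ S h ∧ S h ≤ N ⊔ S (h * π) := by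
    intro h π hπ hdvd
    have hh0 : h ≠ 0 := by
      rintro rfl
      rw [zero_mul, zero_dvd_iff] at hdvd
      exact huB0 hdvd
    have hhL : (h : L) ≠ 0 := fun e => hh0 (Subtype.ext e)
    have hmax : (Ideal.span {π}).IsMaximal :=
      PrincipalIdealRing.isMaximal_of_irreducible hπ.irreducible
    let F := B' ⧸ Ideal.span {π}
    let _ : Field F := Ideal.Quotient.field _
    have hfinF : Module.Finite O F := by
      rw [hmap] at hfinq
      have hle : Ideal.span {uB} ≤ Ideal.span {π} := by
        rw [Ideal.span_singleton_le_span_singleton]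
        exact (dvd_mul_left _ _).trans hdvd
      exact Module.Finite.of_surjective (Ideal.Quotient.factorₐ O hle).toLinearMap (Ideal.Quotient.factor_surjective hle)
    have hFG := zz_N2_quot A u O hN F (by
      change Ideal.Quotient.mk _ (algebraMap A B' u) = 0
      rw [Ideal.Quotient.eq_zero_iff_mem, Ideal.mem_span_singleton]
      exact (dvd_mul_left _ _).trans hdvd)
    -- the map
    have hS : ∀ y : S h, ∃ c : B', (y : L) = h * c := fun y => y.2.2
    choose cc hcc using hS
    have hccu : ∀ (y : S h) (c : B'), (y : L) = h * c → cc y = c := by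
      intro y c hc
      rw [hcc y] at hc
      exact Subtype.ext (mul_left_cancel₀ hhL hc)
    let φ : S h →ₗ[A] F :=
      { toFun := fun y => Ideal.Quotient.mk _ (cc y)
        map_add' := by
          intro x y
          rw [← map_add]
          congr 1
          apply hccu
          push_cast
          rw [hcc x, hcc y]
          ring
        map_smul' := by
          intro a x
          have : cc (a • x) = a • cc x := by
            apply hccu
            push_cast
            rw [hcc x]
            simp only [Algebra.smul_def]
            ring
          rw [this]
          rfl }
    obtain ⟨w, hw⟩ := (dvd_mul_right h π).trans hdvd
    obtain ⟨a, ha, haw⟩ := hF2 w w.2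
    have hrange : (LinearMap.range φ).FG := by
      have haF : algebraMap A F a ≠ 0 := by
        rw [IsScalarTower.algebraMap_apply A O F]
        exact ((hunit a ha).map (algebraMap O F)).ne_zero
      have hinj : Function.Injective (LinearMap.lsmul A F a) := by
        intro x y hxy
        simp only [LinearMap.lsmul_apply, Algebra.smul_def] at hxy
        exact mul_left_cancel₀ haF hxy
      refine Submodule.fg_of_fg_map_injective _ hinj ?_
      refine Submodule.FG.of_le hFG ?_
      rintro _ ⟨_, ⟨y, rfl⟩, rfl⟩
      have hmem : a • (cc y : L) ∈ B := by
        apply hF3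
        · exact B'.algebraMap_mem (algebraMap A O a) |> fun h1 => by
            rw [Algebra.smul_def, IsScalarTower.algebraMap_apply A O L]
            exact mul_mem h1 (cc y).2
        · have : u • a • (cc y : L) = (y : L) * (a • (w : L)) := by
            have e : algebraMap A L u = (h : L) * w := by rw [← huBL, hw]; rfl
            rw [hcc y]
            simp only [Algebra.smul_def, e]
            ring
          rw [this]
          exact mul_mem y.2.1 haw
      have h2 : IsIntegral A (a • cc y : B') := by
        rw [← isIntegral_algHom_iff (B'.val.restrictScalars A) Subtype.val_injective]
        exact hmem
      have h3 := h2.map (Ideal.Quotient.mkₐ A (Ideal.span {π}))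
      exact h3
    obtain ⟨P, hP, hP2⟩ := zz_exists_fg φ hrange
    refine ⟨P.map (S h).subtype, hP.map _, ?_, ?_⟩
    · rintro _ ⟨y, _, rfl⟩
      exact y.2
    · intro x hx
      obtain ⟨y, hy, hxy⟩ := hP2 ⟨x, hx⟩
      rw [LinearMap.mem_ker] at hxy
      have : x = (y : L) + (x - y) := by ring
      rw [this]
      refine Submodule.add_mem_sup ⟨y, hy, rfl⟩ ?_
      have h1 : π ∣ cc (⟨x, hx⟩ - y) := by
        rw [← Ideal.mem_span_singleton, ← Ideal.Quotient.eq_zero_iff_mem]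
        exact hxy
      obtain ⟨d, hd⟩ := h1
      have h4 := hcc (⟨x, hx⟩ - y)
      refine ⟨sub_mem hx.1 y.2.1, d, ?_⟩
      rw [hd] at h4
      push_cast at h4 ⊢
      rw [h4]
      ring
  have hall : ∀ g : B', g ∣ uB → ∃ N : Submodule A L, N.FG ∧ N ≤ B.toSubmodule ∧ B.toSubmodule ≤ N ⊔ S g := by
    intro g
    induction g using UniqueFactorizationMonoid.induction_on_prime with
    | h₁ => intro h; exact absurd (zero_dvd_iff.mp h) huB0
    | h₂ g hg =>
      intro _
      refine ⟨⊥, Submodule.fg_bot, bot_le, ?_⟩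
      rw [bot_sup_eq]
      intro b hb
      obtain ⟨v, rfl⟩ := hg
      refine ⟨hb, (↑v⁻¹ : B') * ⟨b, hBB b hb⟩, ?_⟩
      have : (v : B') * (↑v⁻¹ * ⟨b, hBB b hb⟩) = (⟨b, hBB b hb⟩ : B') := by
        rw [← mul_assoc, Units.mul_inv, one_mul]
      exact (congrArg Subtype.val this).symm
    | h₃ h π hh hπ ih =>
      intro hd
      obtain ⟨N, hN1, hN2, hN3⟩ := ih ((dvd_mul_left _ _).trans hd)
      obtain ⟨N', hN1', hN2', hN3'⟩ := step h π hπ (by rwa [mul_comm])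
      refine ⟨N ⊔ N', hN1.sup hN1', sup_le hN2 (hN2'.trans fun x hx => hx.1), ?_⟩
      rw [mul_comm, sup_assoc]
      exact hN3.trans (sup_le_sup_left hN3' _)
  obtain ⟨N, hN1, hN2, hN3⟩ := hall uB dvd_rfl
  have hSu : ∀ x ∈ S uB, ∃ b : B, x = u • (b : L) := by
    rintro x ⟨hx, c, hc⟩
    have : x = u • (c : L) := by rw [hc, Algebra.smul_def, huBL]
    exact ⟨⟨c, hF3 c c.2 (this ▸ hx)⟩, this⟩
  have hh : IsHausdorff (Ideal.span {u}) B := by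
    constructor
    intro x hx
    have hx' : ∀ n : ℕ, ∃ b : B, x = u ^ n • b := by
      intro n
      have := hx n
      rw [SModEq.zero, Ideal.span_singleton_pow, Submodule.ideal_span_singleton_smul] at this
      obtain ⟨b, _, hb⟩ := this
      exact ⟨b, hb.symm⟩
    have hne : Ideal.span {uB} ≠ ⊤ := by
      rw [← hmap]
      have : (maximalIdeal O).map (algebraMap O B') ≠ ⊤ := by
        rw [Ne, Ideal.map_eq_top_iff (algebraMap O B')]
        · exact Ideal.IsMaximal.ne_top inferInstance
        · have h : Function.Injective (algebraMap O L) := by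
            rw [IsScalarTower.algebraMap_eq O K L]
            exact (algebraMap K L).injective.comp (IsFractionRing.injective O K)
          intro a b hab
          exact h (congrArg Subtype.val hab)
        · exact algebraMap_isIntegral_iff.mpr inferInstance
      exact this
    have hk := Ideal.iInf_pow_eq_bot_of_isDomain _ hne
    have hmem : (⟨x, hBB _ x.2⟩ : B') ∈ (⨅ n : ℕ, Ideal.span {uB} ^ n) := by
      rw [Submodule.mem_iInf]
      intro n
      obtain ⟨b, hb⟩ := hx' n
      rw [Ideal.span_singleton_pow, Ideal.mem_span_singleton]
      refine ⟨⟨b, hBB _ b.2⟩, ?_⟩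
      apply Subtype.ext
      rw [hb]
      simp [Algebra.smul_def, huBL]
    rw [hk, Ideal.mem_bot] at hmem
    have h0 : (x : L) = 0 := congrArg Subtype.val hmem
    exact Subtype.ext h0
  have hq : Module.Finite A (B ⧸ (Ideal.span {u} • ⊤ : Submodule A B)) := by
    have hNB : (N.comap B.toSubmodule.subtype).FG := by
      refine Submodule.fg_of_fg_map_injective B.toSubmodule.subtype Subtype.val_injective ?_
      rw [Submodule.map_comap_eq, Submodule.range_subtype, inf_eq_right.mpr hN2]
      exact hN1
    have : Module.Finite A (N.comap B.toSubmodule.subtype) := Module.Finite.iff_fg.mpr hNB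
    refine Module.Finite.of_surjective ((Submodule.mkQ (Ideal.span {u} • ⊤ : Submodule A B)).comp (N.comap B.toSubmodule.subtype).subtype) ?_
    intro z
    obtain ⟨b, rfl⟩ := Submodule.mkQ_surjective _ z
    obtain ⟨n, hn, s, hs, hns⟩ := Submodule.mem_sup.mp (hN3 b.2)
    obtain ⟨c, hc⟩ := hSu s hs
    refine ⟨⟨⟨n, hN2 hn⟩, hn⟩, ?_⟩
    rw [LinearMap.comp_apply, ← sub_eq_zero, ← map_sub, Submodule.mkQ_apply, Submodule.Quotient.mk_eq_zero,
      Submodule.ideal_span_singleton_smul]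
    refine ⟨-c, trivial, ?_⟩
    apply Subtype.ext
    change u • (-(c : L)) = n - b
    rw [← hns, hc]
    simp
  exact zz_finite_of_complete (Ideal.span {u}) B

theorem zz_T (A : Type) [CommRing A] [IsDomain A] [IsNoetherianRing A] [IsIntegrallyClosed A]
    (u : A) (hu : Prime u) [IsAdicComplete (Ideal.span {u}) A]
    (hN : ∀ [IsDomain (A ⧸ Ideal.span {u})], zzN2 (A ⧸ Ideal.span {u})) : zzN2 A := by
  intro L _ _ _ _ _
  have hp : (Ideal.span {u}).IsPrime := (Ideal.span_singleton_prime hu.ne_zero).mpr hu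
  let O := Localization.AtPrime (Ideal.span {u})
  let K := FractionRing A
  have hle : (Ideal.span {u}).primeCompl ≤ nonZeroDivisors A := (Ideal.span {u}).primeCompl_le_nonZeroDivisors
  have : IsDomain O := IsLocalization.isDomain_localization hle
  have : IsDiscreteValuationRing O := zz_dvr_loc A u hu O
  let _ : Algebra O K := IsLocalization.localizationAlgebraOfSubmonoidLe O K (Ideal.span {u}).primeCompl (nonZeroDivisors A) hle
  have : IsScalarTower A O K := IsLocalization.localization_isScalarTower_of_submonoid_le O K _ _ hle
  have : IsFractionRing O K := IsFractionRing.isFractionRing_of_isDomain_of_isLocalization (Ideal.span {u}).primeCompl O K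
  let _ : Algebra O L := ((algebraMap K L).comp (algebraMap O K)).toAlgebra
  have : IsScalarTower O K L := IsScalarTower.of_algebraMap_eq (fun _ => rfl)
  have : IsScalarTower A O L := IsScalarTower.of_algebraMap_eq (fun a => by
    change _ = algebraMap K L (algebraMap O K (algebraMap A O a))
    rw [← IsScalarTower.algebraMap_apply A O K, ← IsScalarTower.algebraMap_apply A K L])
  exact zz_T_aux A u hu hN O K L

theorem zz_N2_field (k : Type) [Field k] : zzN2 k := by
  intro L _ _ _ _ _
  have h1 : Module.Finite k (FractionRing k) := 
    Module.Finite.of_surjective (Algebra.linearMap k (FractionRing k)) (IsFractionRing.surjective_iff_isField.mpr (Field.toIsField k))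
  have : Module.Finite k L := Module.Finite.trans (FractionRing k) L
  infer_instance

theorem zz_N2_equiv {A B : Type} [CommRing A] [IsDomain A] [CommRing B] [IsDomain B] (e : A ≃+* B)
    (h : zzN2 A) : zzN2 B := by
  intro L _ _ _ _ _
  let _ : Algebra A L := ((algebraMap B L).comp e.toRingHom).toAlgebra
  let g : FractionRing A ≃+* FractionRing B := IsFractionRing.ringEquivOfRingEquiv e
  let _ : Algebra (FractionRing A) L := ((algebraMap (FractionRing B) L).comp g.toRingHom).toAlgebra
  have t : IsScalarTower A (FractionRing A) L := IsScalarTower.of_algebraMap_eq (fun a => by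
    change algebraMap B L (e a) = algebraMap (FractionRing B) L (g (algebraMap A _ a))
    rw [IsFractionRing.ringEquivOfRingEquiv_algebraMap, ← IsScalarTower.algebraMap_apply])
  have fd : FiniteDimensional (FractionRing A) L := by
    obtain ⟨S, hS⟩ := (inferInstance : Module.Finite (FractionRing B) L)
    refine ⟨S, ?_⟩
    rw [eq_top_iff]
    intro x _
    have hx : x ∈ Submodule.span (FractionRing B) (S : Set L) := by rw [hS]; trivial
    induction hx using Submodule.span_induction with
    | mem x h => exact Submodule.subset_span h
    | zero => exact zero_mem _
    | add x y _ _ h1 h2 => exact add_mem (h1 trivial) (h2 trivial)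
    | smul o x _ h =>
      have : o • x = (g.symm o) • x := by
        rw [Algebra.smul_def, Algebra.smul_def]
        congr 1
        change _ = algebraMap (FractionRing B) L (g (g.symm o))
        rw [RingEquiv.apply_symm_apply]
      rw [this]
      exact Submodule.smul_mem _ _ (h trivial)
  obtain ⟨S, hS⟩ := h L
  have hint : ∀ x : L, IsIntegral A x ↔ IsIntegral B x := by
    intro x
    constructor
    · rintro ⟨p, hp, hpx⟩
      refine ⟨p.map e.toRingHom, hp.map _, ?_⟩
      rw [Polynomial.eval₂_map]
      exact hpx
    · rintro ⟨p, hp, hpx⟩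
      refine ⟨p.map e.symm.toRingHom, hp.map _, ?_⟩
      rw [Polynomial.eval₂_map, ← hpx]
      congr 1
      ext b
      change algebraMap B L (e (e.symm b)) = _
      simp
  have hA : (integralClosure A L).toSubmodule.FG := Module.Finite.iff_fg.mp (h L)
  have hB : (integralClosure B L).toSubmodule.FG := by
    obtain ⟨S, hS⟩ := hA
    refine ⟨S, ?_⟩
    apply le_antisymm
    · rw [Submodule.span_le]
      intro x hx
      have : x ∈ (integralClosure A L).toSubmodule := by rw [← hS]; exact Submodule.subset_span hx
      exact (hint x).mp this
    · intro x hx0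
      have hx : x ∈ (integralClosure A L).toSubmodule := (hint x).mpr hx0
      clear hx0
      rw [← hS] at hx
      induction hx using Submodule.span_induction with
      | mem x h => exact Submodule.subset_span h
      | zero => exact zero_mem _
      | add x y _ _ h1 h2 => exact add_mem h1 h2
      | smul o x _ h =>
        have h2 := Submodule.smul_mem _ (e o) h
        rw [Algebra.smul_def] at h2 ⊢
        exact h2
  exact Module.Finite.iff_fg.mpr hB

theorem zz_N2_powerSeries (A : Type) [CommRing A] [IsDomain A] [IsNoetherianRing A] [IsIntegrallyClosed A]
    (h : zzN2 A) : zzN2 (PowerSeries A) := by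
  have := zz_normal_powerSeries (A := A)
  refine zz_T (PowerSeries A) PowerSeries.X PowerSeries.X_prime ?_
  intro _
  obtain ⟨e⟩ := zz_quotX (A := A)
  exact zz_N2_equiv e.symm h


theorem zz_pdeg {k : Type} [Field k] (p : ℕ) (hp : p.Prime) [CharP k p] (E : Subring k)
    (hE : ∀ x : k, x ^ p ∈ E) (l : k) (hl : l ∉ E) (q : Polynomial k) (hq : ∀ i, q.coeff i ∈ E)
    (hd : q.degree < p) (h0 : q.eval l = 0) : q = 0 := by
  have hinv : ∀ x ∈ E, x⁻¹ ∈ E := by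
    intro x hx
    by_cases h : x = 0
    · subst h; simp
    · have : x⁻¹ = x ^ (p - 1) * (x⁻¹) ^ p := by
        have h1 : x⁻¹ ^ p = x⁻¹ ^ (p - 1) * x⁻¹ := by
          rw [← pow_succ, Nat.sub_add_cancel hp.one_le]
        rw [h1, ← mul_assoc, ← mul_pow, mul_inv_cancel₀ h, one_pow, one_mul]
      rw [this]
      exact mul_mem (pow_mem hx _) (hE _)
  let E' : Subfield k := { E with inv_mem' := hinv }
  have hlp : l ^ p ∈ E' := hE l
  have hirr : Irreducible (Polynomial.X ^ p - Polynomial.C (⟨l ^ p, hlp⟩ : E')) := by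
    apply X_pow_sub_C_irreducible_of_prime hp
    intro b hb
    have hb' : (b : k) ^ p = l ^ p := congrArg Subtype.val hb
    have := Fact.mk hp
    have h2 : (b : k) = l := frobenius_inj k p hb'
    exact hl (h2 ▸ b.2)
  have hmin : Polynomial.X ^ p - Polynomial.C (⟨l ^ p, hlp⟩ : E') = minpoly E' l := by
    apply minpoly.eq_of_irreducible_of_monic hirr
    · simp
      exact sub_self _
    · exact Polynomial.monic_X_pow_sub_C _ hp.ne_zero
  have hlift : q ∈ Polynomial.lifts (algebraMap E' k) := by
    rw [Polynomial.lifts_iff_coeff_lifts]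
    intro i
    exact ⟨⟨q.coeff i, hq i⟩, rfl⟩
  obtain ⟨r, hr⟩ := hlift
  have hr : r.map (algebraMap E' k) = q := hr
  have hr0 : r = 0 := by
    by_contra hne
    have h1 := minpoly.degree_le_of_ne_zero E' l hne (by
      rw [← hr, Polynomial.eval_map_algebraMap] at h0
      exact h0)
    rw [← hmin, Polynomial.degree_X_pow_sub_C hp.pos] at h1
    rw [← hr, Polynomial.degree_map] at hd
    exact absurd h1 (not_le.mpr hd)
  rw [← hr, hr0, Polynomial.map_zero]

theorem zz_adj {D : Type} [CommRing D] [IsLocalRing D] (p : ℕ) (hp : p.Prime)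
    [CharP (ResidueField D) p] (N : Subring D) (l : D) (hlN : l ^ p ∈ N)
    (hk : ∀ x : ResidueField D, x ^ p ∈ N.map (residue D)) (hl : residue D l ∉ N.map (residue D))
    (x : D) (hx : x ∈ Subring.closure (N ∪ {l} : Set D)) (hxm : x ∈ maximalIdeal D) :
    ∃ q : Polynomial D, x = q.eval l ∧ ∀ i, q.coeff i ∈ N ∧ q.coeff i ∈ maximalIdeal D := by
  have h1 : ∃ q : Polynomial N, Polynomial.aeval l q = x := by
    have : x ∈ Algebra.adjoin N ({l} : Set D) := by
      rw [← Subalgebra.mem_toSubring, Algebra.adjoin_eq_ring_closure]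
      have hrg : Set.range (algebraMap N D) = (N : Set D) := Subtype.range_coe
      rw [hrg]
      exact hx
    rw [Algebra.adjoin_singleton_eq_range_aeval] at this
    exact this
  obtain ⟨q, hq⟩ := h1
  set f : Polynomial N := Polynomial.X ^ p - Polynomial.C (⟨l ^ p, hlN⟩ : N)
  have hfm : f.Monic := Polynomial.monic_X_pow_sub_C _ hp.ne_zero
  have hf0 : Polynomial.aeval l f = 0 := by
    simp [f]
    exact sub_self _
  have : Nontrivial N := inferInstance
  set r := q %ₘ f
  have hr : Polynomial.aeval l r = x := by
    rw [← hq, ← Polynomial.modByMonic_add_div q f, map_add, map_mul, hf0, zero_mul, add_zero]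
  have hrd : r.degree < p := by
    have := Polynomial.degree_modByMonic_lt q hfm
    rwa [Polynomial.degree_X_pow_sub_C hp.pos] at this
  set r' : Polynomial D := r.map N.subtype
  have hev : r'.eval l = x := by
    rw [← hr, Polynomial.eval_map]
    rfl
  have hz : r'.map (residue D) = 0 := by
    apply zz_pdeg p hp (N.map (residue D)) hk (residue D l) hl
    · intro i
      rw [Polynomial.coeff_map, Polynomial.coeff_map]
      exact ⟨_, (r.coeff i).2, rfl⟩
    · refine lt_of_le_of_lt ?_ hrd
      exact Polynomial.degree_map_le.trans Polynomial.degree_map_le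
    · rw [Polynomial.eval_map, Polynomial.eval₂_at_apply, hev]
      exact (residue_eq_zero_iff x).mpr hxm
  refine ⟨r', hev.symm, fun i => ⟨?_, ?_⟩⟩
  · rw [Polynomial.coeff_map]; exact (r.coeff i).2
  · have : (r'.map (residue D)).coeff i = (0 : Polynomial (ResidueField D)).coeff i := by rw [hz]
    rw [Polynomial.coeff_map, Polynomial.coeff_zero] at this
    exact (residue_eq_zero_iff _).mp this

/-- the tower of subrings -/
def zzM {D : Type} [CommRing D] (p : ℕ) (S : Set D) : ℕ → Subring D
  | 0 => ⊤
  | n + 1 => Subring.closure ({x | ∃ c ∈ zzM p S n, x = c ^ p} ∪ {x | ∃ c ∈ zzM p S n, x = p * c} ∪ S)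

section
variable {D : Type} [CommRing D] (p : ℕ) (S : Set D)

theorem zzM_pow (n : ℕ) (c : D) (hc : c ∈ zzM p S n) : c ^ p ∈ zzM p S (n + 1) :=
  Subring.subset_closure (Or.inl (Or.inl ⟨c, hc, rfl⟩))
theorem zzM_mul (n : ℕ) (c : D) (hc : c ∈ zzM p S n) : p * c ∈ zzM p S (n + 1) :=
  Subring.subset_closure (Or.inl (Or.inr ⟨c, hc, rfl⟩))
theorem zzM_S (n : ℕ) (c : D) (hc : c ∈ S) : c ∈ zzM p S n := by
  cases n with
  | zero => trivial
  | succ n => exact Subring.subset_closure (Or.inr hc)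
theorem zzM_anti (n : ℕ) : zzM p S (n + 1) ≤ zzM p S n := by
  induction n with
  | zero => intro x _; trivial
  | succ n ih =>
    refine Subring.closure_le.mpr ?_
    rintro x ((⟨c, hc, rfl⟩ | ⟨c, hc, rfl⟩) | hx)
    · exact zzM_pow p S n c (ih hc)
    · exact zzM_mul p S n c (ih hc)
    · exact zzM_S p S _ x hx

/-- `M + I` as a subring -/
def zzAdd (M : Subring D) (I : Ideal D) : Subring D := (M.map (Ideal.Quotient.mk I)).comap (Ideal.Quotient.mk I)

theorem zzAdd_mem (M : Subring D) (I : Ideal D) (x : D) : x ∈ zzAdd M I ↔ ∃ d ∈ M, x - d ∈ I := by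
  unfold zzAdd
  rw [Subring.mem_comap, Subring.mem_map]
  constructor
  · rintro ⟨d, hd, h⟩
    exact ⟨d, hd, Ideal.Quotient.eq.mp h.symm⟩
  · rintro ⟨d, hd, h⟩
    exact ⟨d, hd, (Ideal.Quotient.eq.mpr h).symm⟩

theorem zzM_a (hp : p.Prime) (m : Ideal D) (hpm : (p : D) ∈ m) 
    (h1 : ∀ x : D, ∃ d ∈ zzM p S 1, x - d ∈ m) (n : ℕ) (x : D) (hx : x ∈ zzM p S n) :
    ∃ d ∈ zzM p S (n + 1), x - d ∈ m ^ (n + 1) := by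
  induction n generalizing x with
  | zero => simpa using h1 x
  | succ n ih =>
    rw [← zzAdd_mem]
    revert x
    change zzM p S (n + 1) ≤ _
    refine Subring.closure_le.mpr ?_
    rintro x ((⟨c, hc, rfl⟩ | ⟨c, hc, rfl⟩) | hx)
    · obtain ⟨d, hd, hz⟩ := ih c hc
      rw [SetLike.mem_coe, zzAdd_mem]
      refine ⟨d ^ p, zzM_pow p S _ d hd, ?_⟩
      obtain ⟨r, hr⟩ := exists_add_pow_prime_eq hp d (c - d)
      rw [add_sub_cancel] at hr
      have : c ^ p - d ^ p = (c - d) ^ p + (c - d) * p * (d * r) := by rw [hr]; ring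
      rw [this]
      apply add_mem
      · have h2 : (c - d) ^ p ∈ (m ^ (n + 1)) ^ p := Ideal.pow_mem_pow hz p
        rw [← pow_mul] at h2
        refine Ideal.pow_le_pow_right ?_ h2
        nlinarith [hp.two_le]
      · refine Ideal.mul_mem_right _ _ ?_
        rw [pow_succ]
        exact Ideal.mul_mem_mul hz hpm
    · obtain ⟨d, hd, hz⟩ := ih c hc
      rw [SetLike.mem_coe, zzAdd_mem]
      refine ⟨p * d, zzM_mul p S _ d hd, ?_⟩
      rw [← mul_sub, pow_succ']
      exact Ideal.mul_mem_mul hpm hz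
    · rw [SetLike.mem_coe, zzAdd_mem]
      exact ⟨x, zzM_S p S _ x hx, by simp⟩
end


/-- p-th powers plus p-multiples -/
def zzN0 {D : Type} [CommRing D] (p : ℕ) (hp : p.Prime) (M : Subring D) : Subring D where
  carrier := {x | ∃ c ∈ M, ∃ e ∈ M, x = c ^ p + p * e}
  mul_mem' := by
    rintro x y ⟨c, hc, e, he, rfl⟩ ⟨d, hd, f, hf, rfl⟩
    refine ⟨c * d, mul_mem hc hd, c ^ p * f + e * d ^ p + p * (e * f), ?_, by ring⟩
    exact add_mem (add_mem (mul_mem (pow_mem hc _) hf) (mul_mem he (pow_mem hd _)))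
      (mul_mem (natCast_mem M p) (mul_mem he hf))
  one_mem' := ⟨1, one_mem _, 0, zero_mem _, by simp⟩
  add_mem' := by
    rintro x y ⟨c, hc, e, he, rfl⟩ ⟨d, hd, f, hf, rfl⟩
    obtain ⟨r, hr⟩ := exists_add_pow_prime_eq hp (⟨c, hc⟩ : M) ⟨d, hd⟩
    have hr' : (c + d) ^ p = c ^ p + d ^ p + p * c * d * (r : D) := by
      simpa using congrArg Subtype.val hr
    refine ⟨c + d, add_mem hc hd, e + f - c * d * r, 
      sub_mem (add_mem he hf) (mul_mem (mul_mem hc hd) r.2), ?_⟩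
    rw [hr']; ring
  zero_mem' := ⟨0, zero_mem _, 0, zero_mem _, by simp [hp.ne_zero]⟩
  neg_mem' := by
    rintro x ⟨c, hc, e, he, rfl⟩
    obtain ⟨r, hr⟩ := exists_add_pow_prime_eq hp (⟨c, hc⟩ : M) (-⟨c, hc⟩)
    have hr' : (c + -c) ^ p = c ^ p + (-c) ^ p + p * c * (-c) * (r : D) := by
      simpa using congrArg Subtype.val hr
    rw [add_neg_cancel, zero_pow hp.ne_zero] at hr'
    refine ⟨-c, neg_mem hc, -e + c * (-c) * r, 
      add_mem (neg_mem he) (mul_mem (mul_mem hc (neg_mem hc)) r.2), ?_⟩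
    have : (-c) ^ p = -(c ^ p) - p * c * (-c) * (r : D) := by linear_combination -hr'
    rw [this]; ring

theorem zzM_res {D : Type} [CommRing D] (p : ℕ) (S : Set D) (hp : p.Prime) (m : Ideal D) (hpm : (p : D) ∈ m) 
    (h1 : ∀ x : D, ∃ d ∈ zzM p S 1, x - d ∈ m) (n : ℕ) (x : D) : ∃ d ∈ zzM p S n, x - d ∈ m := by
  induction n with
  | zero => exact ⟨x, trivial, by simp⟩
  | succ n ih =>
    obtain ⟨d, hd, hx⟩ := ih
    obtain ⟨e, he, hy⟩ := zzM_a p S hp m hpm h1 n d hd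
    refine ⟨e, he, ?_⟩
    have : x - e = (x - d) + (d - e) := by ring
    rw [this]
    exact add_mem hx (Ideal.pow_le_self (by omega) hy)

theorem zzM_b_step {D : Type} [CommRing D] [IsLocalRing D] (p : ℕ) (hp : p.Prime)
    [CharP (ResidueField D) p] {ι : Type} [LinearOrder ι] (s : ι → D)
    (h1 : ∀ x : D, ∃ d ∈ zzM p (Set.range s) 1, x - d ∈ maximalIdeal D)
    (hind : ∀ i, residue D (s i) ∉ Subring.closure ({x : ResidueField D | ∃ y, x = y ^ p} ∪ (fun j => residue D (s j)) '' {j | j < i}))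
    (n : ℕ) (hbase : ∀ c ∈ zzM p (Set.range s) n, c ∈ maximalIdeal D →
      ∃ e ∈ zzM p (Set.range s) n, c ^ p - p * e ∈ maximalIdeal D ^ (n + 2)) :
    ∀ x ∈ zzM p (Set.range s) (n + 1), x ∈ maximalIdeal D →
      ∃ e ∈ zzM p (Set.range s) n, x - p * e ∈ maximalIdeal D ^ (n + 2) := by
  classical
  set m := maximalIdeal D
  have hpm : (p : D) ∈ m := by
    rw [← residue_eq_zero_iff, map_natCast, CharP.cast_eq_zero]
  have hres := zzM_res p (Set.range s) hp m hpm h1 n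
  have hle := zzM_anti p (Set.range s) n
  have hMS := zzM_S p (Set.range s) n
  have hMp := zzM_pow p (Set.range s) n
  have hMm := zzM_mul p (Set.range s) n
  have hdef : zzM p (Set.range s) (n + 1) = Subring.closure ({x | ∃ c ∈ zzM p (Set.range s) n, x = c ^ p} ∪ {x | ∃ c ∈ zzM p (Set.range s) n, x = p * c} ∪ Set.range s) := rfl
  rw [hdef]
  have hle' : ∀ c ∈ zzM p (Set.range s) n, c ^ p ∈ zzM p (Set.range s) n := fun c hc => hle (hMp c hc)
  have hlm' : ∀ c ∈ zzM p (Set.range s) n, p * c ∈ zzM p (Set.range s) n := fun c hc => hle (hMm c hc)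
  clear hdef hMp hMm hle h1
  generalize zzM p (Set.range s) n = M at *
  let J : D → Prop := fun x => ∃ e ∈ M, x - p * e ∈ m ^ (n + 2)
  have hJ0 : J 0 := ⟨0, zero_mem _, by simp⟩
  have hJa : ∀ x y, J x → J y → J (x + y) := by
    rintro x y ⟨e, he, h⟩ ⟨f, hf, g⟩
    refine ⟨e + f, add_mem he hf, ?_⟩
    have : x + y - p * (e + f) = (x - p * e) + (y - p * f) := by ring
    rw [this]; exact add_mem h g
  have hJm : ∀ x y, J x → y ∈ M → J (x * y) := by
    rintro x y ⟨e, he, h⟩ hy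
    refine ⟨e * y, mul_mem he hy, ?_⟩
    have : x * y - p * (e * y) = (x - p * e) * y := by ring
    rw [this]; exact Ideal.mul_mem_right _ _ h
  let N0 := zzN0 p hp M
  have hN0M : N0 ≤ M := by
    rintro x ⟨c, hc, e, he, rfl⟩
    exact add_mem (hle' c hc) (hlm' e he)
  have hN0p : ∀ c ∈ M, c ^ p ∈ N0 := fun c hc => ⟨c, hc, 0, zero_mem _, by simp⟩
  have hN0m : ∀ c ∈ M, p * c ∈ N0 := fun c hc => ⟨0, zero_mem _, c, hc, by simp [hp.ne_zero]⟩
  let NF : Finset ι → Subring D := fun F => Subring.closure (N0 ∪ s '' F : Set D)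
  have hNFM : ∀ F, NF F ≤ M := by
    intro F
    refine Subring.closure_le.mpr ?_
    rintro x (hx | ⟨i, _, rfl⟩)
    · exact hN0M hx
    · exact hMS _ ⟨i, rfl⟩
  have hN0F : ∀ F, N0 ≤ NF F := fun F x hx => Subring.subset_closure (Or.inl hx)
  have hmono : ∀ F G, F ⊆ G → NF F ≤ NF G := by
    intro F G h
    apply Subring.closure_mono
    apply Set.union_subset_union_right
    exact Set.image_mono (by exact_mod_cast h)
  have key : ∀ F : Finset ι, ∀ x ∈ NF F, x ∈ m → J x := by
    intro F
    induction F using Finset.induction_on_max with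
    | empty =>
      intro x hx hxm
      have : NF ∅ ≤ N0 := by
        refine Subring.closure_le.mpr ?_
        simp
      obtain ⟨c, hc, e, he, rfl⟩ := this hx
      have hcm : c ∈ m := by
        have h2 : c ^ p ∈ m := by
          have := sub_mem hxm (Ideal.mul_mem_right e m hpm)
          simpa using this
        exact Ideal.IsPrime.mem_of_pow_mem inferInstance p h2
      obtain ⟨f, hf, h⟩ := hbase c hc hcm
      refine ⟨f + e, add_mem hf he, ?_⟩
      have : c ^ p + p * e - p * (f + e) = c ^ p - p * f := by ring
      rw [this]; exact h
    | insert a F hF ih =>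
      intro x hx hxm
      have hx' : x ∈ Subring.closure ((NF F : Set D) ∪ {s a}) := by
        refine Subring.closure_le.mpr ?_ hx
        rintro y (hy | ⟨i, hi, rfl⟩)
        · exact Subring.subset_closure (Or.inl (hN0F F hy))
        · rw [Finset.mem_coe, Finset.mem_insert] at hi
          rcases hi with rfl | hi
          · exact Subring.subset_closure (Or.inr rfl)
          · exact Subring.subset_closure (Or.inl (Subring.subset_closure (Or.inr ⟨i, hi, rfl⟩)))
      obtain ⟨q, hq, hqc⟩ := zz_adj p hp (NF F) (s a) (hN0F F (hN0p _ (hMS _ ⟨a, rfl⟩))) (by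
        intro z
        obtain ⟨y, rfl⟩ := residue_surjective z
        obtain ⟨c, hc, hcy⟩ := hres y
        refine ⟨c ^ p, hN0F F (hN0p c hc), ?_⟩
        rw [map_pow]
        congr 1
        rw [← sub_eq_zero, ← map_sub, residue_eq_zero_iff, ← neg_sub]
        exact neg_mem hcy) (by
        intro hmem
        refine hind a ?_
        have : (NF F).map (residue D) ≤ Subring.closure ({x : ResidueField D | ∃ y, x = y ^ p} ∪ (fun j => residue D (s j)) '' {j | j < a}) := by
          rw [Subring.map_le_iff_le_comap]
          refine Subring.closure_le.mpr ?_
          rintro y (⟨c, hc, e, he, rfl⟩ | ⟨i, hi, rfl⟩)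
          · apply Subring.subset_closure
            left
            refine ⟨residue D c, ?_⟩
            rw [map_add, map_mul, map_natCast, CharP.cast_eq_zero, zero_mul, add_zero, map_pow]
          · apply Subring.subset_closure
            right
            exact ⟨i, hF i hi, rfl⟩
        exact this hmem) x hx' hxm
      rw [hq, Polynomial.eval_eq_sum_range]
      have : ∀ t : Finset ℕ, J (∑ i ∈ t, q.coeff i * s a ^ i) := by
        intro t
        induction t using Finset.induction_on with
        | empty => simpa using hJ0
        | insert i t hi iht =>
          rw [Finset.sum_insert hi]
          exact hJa _ _ (hJm _ _ (ih _ (hqc i).1 (hqc i).2) (pow_mem (hMS _ ⟨a, rfl⟩) _)) iht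
      exact this _
  intro x hx hxm
  have hex : ∃ F, x ∈ NF F := by
    clear hxm
    induction hx using Subring.closure_induction with
    | mem x hx =>
      rcases hx with ((⟨c, hc, rfl⟩ | ⟨c, hc, rfl⟩) | ⟨i, rfl⟩)
      · exact ⟨∅, hN0F _ (hN0p c hc)⟩
      · exact ⟨∅, hN0F _ (hN0m c hc)⟩
      · exact ⟨{i}, Subring.subset_closure (Or.inr ⟨i, by simp, rfl⟩)⟩
    | zero => exact ⟨∅, zero_mem _⟩
    | one => exact ⟨∅, one_mem _⟩
    | add x y _ _ h1 h2 =>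
      obtain ⟨F, hF⟩ := h1
      obtain ⟨G, hG⟩ := h2
      exact ⟨F ∪ G, add_mem (hmono _ _ Finset.subset_union_left hF) (hmono _ _ Finset.subset_union_right hG)⟩
    | neg x _ h => obtain ⟨F, hF⟩ := h; exact ⟨F, neg_mem hF⟩
    | mul x y _ _ h1 h2 =>
      obtain ⟨F, hF⟩ := h1
      obtain ⟨G, hG⟩ := h2
      exact ⟨F ∪ G, mul_mem (hmono _ _ Finset.subset_union_left hF) (hmono _ _ Finset.subset_union_right hG)⟩
  obtain ⟨F, hF⟩ := hex
  exact key F x hF hxm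

theorem zzM_b {D : Type} [CommRing D] [IsLocalRing D] (p : ℕ) (hp : p.Prime)
    [CharP (ResidueField D) p] {ι : Type} [LinearOrder ι] (s : ι → D)
    (h1 : ∀ x : D, ∃ d ∈ zzM p (Set.range s) 1, x - d ∈ maximalIdeal D)
    (hind : ∀ i, residue D (s i) ∉ Subring.closure ({x : ResidueField D | ∃ y, x = y ^ p} ∪ (fun j => residue D (s j)) '' {j | j < i}))
    (n : ℕ) : ∀ x ∈ zzM p (Set.range s) (n + 1), x ∈ maximalIdeal D →
      ∃ e ∈ zzM p (Set.range s) n, x - p * e ∈ maximalIdeal D ^ (n + 2) := by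
  have hpm : (p : D) ∈ maximalIdeal D := by
    rw [← residue_eq_zero_iff, map_natCast, CharP.cast_eq_zero]
  induction n with
  | zero =>
    apply zzM_b_step p hp s h1 hind
    intro c _ hc
    refine ⟨0, zero_mem _, ?_⟩
    rw [mul_zero, sub_zero]
    exact Ideal.pow_le_pow_right hp.two_le (Ideal.pow_mem_pow hc p)
  | succ n ih =>
    apply zzM_b_step p hp s h1 hind
    intro c hc hcm
    obtain ⟨f, hf, hz⟩ := ih c hc hcm
    obtain ⟨r, hr⟩ := exists_add_pow_prime_eq hp (p * f) (c - p * f)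
    rw [add_sub_cancel] at hr
    refine ⟨p ^ (p - 1) * f ^ p, mul_mem (pow_mem (natCast_mem _ p) _) (zzM_pow p _ n f hf), ?_⟩
    have h2 : (p : D) * (p ^ (p - 1) * f ^ p) = (p * f) ^ p := by
      rw [← mul_assoc, ← pow_succ', Nat.sub_add_cancel hp.one_le, mul_pow]
    rw [h2, hr]
    have h3 : (p * f) ^ p + (c - p * f) ^ p + ↑p * (p * f) * (c - p * f) * r - (p * f) ^ p
      = (c - p * f) ^ p + (c - p * f) * p * (p * f * r) := by ring
    rw [h3]
    apply add_mem
    · have h2 := Ideal.pow_mem_pow hz p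
      rw [← pow_mul] at h2
      refine Ideal.pow_le_pow_right ?_ h2
      nlinarith [hp.two_le]
    · refine Ideal.mul_mem_right _ _ ?_
      have := Ideal.mul_mem_mul hz hpm
      rwa [← pow_succ] at this


theorem zz_pbasis (D : Type) [CommRing D] [IsLocalRing D] (p : ℕ)
    [CharP (ResidueField D) p] : ∃ (ι : Type) (_ : LinearOrder ι) (s : ι → D),
    (∀ x : D, ∃ d ∈ zzM p (Set.range s) 1, x - d ∈ maximalIdeal D) ∧
    (∀ i, residue D (s i) ∉ Subring.closure ({x : ResidueField D | ∃ y, x = y ^ p} ∪ (fun j => residue D (s j)) '' {j | j < i})) := by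
  classical
  let k := ResidueField D
  let r : k → k → Prop := WellOrderingRel
  have hwo : IsWellOrder k r := WellOrderingRel.isWellOrder
  let lo : LinearOrder k := linearOrderOfSTO r
  have hwf : WellFounded (fun a b : k => a < b) := hwo.toIsWellFounded.wf
  let Λ : Set k := {t | t ∉ Subring.closure ({x : k | ∃ y, x = y ^ p} ∪ {s | s < t})}
  choose σ hσ using (residue_surjective (R := D))
  have hgen : ∀ t : k, t ∈ Subring.closure ({x : k | ∃ y, x = y ^ p} ∪ Λ) := by
    intro t
    induction t using hwf.induction with
    | _ t ih =>
      by_cases ht : t ∈ Λ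
      · exact Subring.subset_closure (Or.inr ht)
      · have ht : t ∈ Subring.closure ({x : k | ∃ y, x = y ^ p} ∪ {s | s < t}) := not_not.mp ht
        refine Subring.closure_le.mpr ?_ ht
        rintro x (hx | hx)
        · exact Subring.subset_closure (Or.inl hx)
        · exact ih x hx
  refine ⟨Λ, inferInstance, fun i => σ i.1, ?_, ?_⟩
  · intro x
    have hle : Subring.closure ({x : k | ∃ y, x = y ^ p} ∪ Λ) ≤ (zzM p (Set.range fun i : Λ => σ i.1) 1).map (residue D) := by
      refine Subring.closure_le.mpr ?_
      rintro z (⟨y, rfl⟩ | hz)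
      · exact ⟨σ y ^ p, zzM_pow p _ 0 _ trivial, by rw [map_pow, hσ]⟩
      · exact ⟨σ z, zzM_S p _ 1 _ ⟨⟨z, hz⟩, rfl⟩, hσ z⟩
    obtain ⟨d, hd, h⟩ := hle (hgen (residue D x))
    exact ⟨d, hd, by rw [← residue_eq_zero_iff, map_sub, h, sub_self]⟩
  · intro i hi
    refine i.2 ?_
    rw [hσ] at hi
    refine Subring.closure_mono ?_ hi
    apply Set.union_subset_union_right
    rintro _ ⟨j, hj, rfl⟩
    simp only [hσ]
    exact hj

/-- what a coefficient ring is -/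
def zzCoeff (D : Type) [CommRing D] [IsLocalRing D] (C : Subring D) (π : D) : Prop :=
  π ∈ C ∧ π ∈ maximalIdeal D ∧ (∀ x, ∃ c ∈ C, x - c ∈ maximalIdeal D) ∧
  (∀ c ∈ C, c ∈ maximalIdeal D → ∃ e ∈ C, c = π * e) ∧
  (π ≠ 0 → ∀ x, (∀ n, ∃ c ∈ C, x - c ∈ maximalIdeal D ^ n) → x ∈ C)

theorem zz_coeff_p (D : Type) [CommRing D] [IsDomain D] [IsLocalRing D] [IsNoetherianRing D]
    [IsAdicComplete (maximalIdeal D) D] (p : ℕ) (hp : p.Prime)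
    [CharP (ResidueField D) p] : ∃ C : Subring D, zzCoeff D C p := by
  classical
  obtain ⟨ι, _, s, h1, hind⟩ := zz_pbasis D p
  have hb := zzM_b p hp s h1 hind
  have hpm : (p : D) ∈ maximalIdeal D := by
    rw [← residue_eq_zero_iff, map_natCast, CharP.cast_eq_zero]
  have ha := zzM_a p (Set.range s) hp (maximalIdeal D) hpm h1
  set M := zzM p (Set.range s)
  set m := maximalIdeal D with hm
  let T : ℕ → Subring D := fun n => zzAdd (M n) (m ^ (n + 1))
  have hT : ∀ n x, x ∈ T n ↔ ∃ d ∈ M n, x - d ∈ m ^ (n + 1) := fun n x => zzAdd_mem _ _ _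
  let C : Subring D := ⨅ n, T n
  have hC : ∀ x, x ∈ C ↔ ∀ n, x ∈ T n := fun x => Subring.mem_iInf
  have hTa : ∀ n x, x ∈ T n → ∃ y ∈ T (n + 1), x - y ∈ m ^ (n + 1) := by
    intro n x hx
    obtain ⟨d, hd, h⟩ := (hT n x).mp hx
    obtain ⟨e, he, h'⟩ := ha n d hd
    refine ⟨e, (hT _ _).mpr ⟨e, he, by simp⟩, ?_⟩
    have : x - e = (x - d) + (d - e) := by ring
    rw [this]; exact add_mem h h'
  have hTanti : ∀ n, T (n + 1) ≤ T n := by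
    intro n x hx
    obtain ⟨d, hd, h⟩ := (hT _ x).mp hx
    exact (hT _ _).mpr ⟨d, zzM_anti p _ n hd, Ideal.pow_le_pow_right (by omega) h⟩
  have hTanti' : ∀ a b, a ≤ b → T b ≤ T a := fun a b h => antitone_nat_of_succ_le hTanti h
  have hTclosed : ∀ n x y, y ∈ T n → x - y ∈ m ^ (n + 1) → x ∈ T n := by
    intro n x y hy hxy
    obtain ⟨d, hd, h⟩ := (hT _ y).mp hy
    refine (hT _ _).mpr ⟨d, hd, ?_⟩
    have : x - d = (x - y) + (y - d) := by ring
    rw [this]; exact add_mem hxy h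
  have hdense : ∀ n x, x ∈ T n → ∃ c ∈ C, x - c ∈ m ^ (n + 1) := by
    intro n x hx
    choose! g hg1 hg2 using hTa
    let f : ℕ → D := fun j => Nat.rec x (fun j y => g (n + j) y) j
    have hf0 : f 0 = x := rfl
    have hfs : ∀ j, f (j + 1) = g (n + j) (f j) := fun j => rfl
    have hfT : ∀ j, f j ∈ T (n + j) := by
      intro j
      induction j with
      | zero => exact hx
      | succ j ih => rw [hfs]; exact hg1 _ _ ih
    have hfd : ∀ j, f j - f (j + 1) ∈ m ^ (n + j + 1) := fun j => by
      rw [hfs]; exact hg2 _ _ (hfT j)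
    have hfd' : ∀ a b, a ≤ b → f a - f b ∈ m ^ (n + a + 1) := by
      intro a b hab
      induction b, hab using Nat.le_induction with
      | base => simp
      | succ b hab ih =>
        have : f a - f (b + 1) = (f a - f b) + (f b - f (b + 1)) := by ring
        rw [this]
        exact add_mem ih (Ideal.pow_le_pow_right (by omega) (hfd b))
    obtain ⟨L, hL⟩ := IsPrecomplete.prec (I := m) (M := D) inferInstance (f := f) (by
      intro a b hab
      rw [SModEq.sub_mem, smul_eq_mul, Ideal.mul_top]
      exact Ideal.pow_le_pow_right (by omega) (hfd' a b hab))
    have hL' : ∀ j, f j - L ∈ m ^ (n + j + 1) := by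
      intro j
      have h2 := hL (n + j + 1)
      rw [SModEq.sub_mem, smul_eq_mul, Ideal.mul_top] at h2
      have : f j - L = (f j - f (n + j + 1)) + (f (n + j + 1) - L) := by ring
      rw [this]
      exact add_mem (hfd' j (n + j + 1) (by omega)) h2
    refine ⟨L, (hC L).mpr fun j => ?_, hL' 0⟩
    refine hTanti' j (n + j) (by omega) (hTclosed _ _ _ (hfT j) ?_)
    rw [← neg_sub]
    exact neg_mem (hL' j)
  have hpC : (p : D) ∈ C := natCast_mem C p
  have hclosed : ∀ x, (∀ n, ∃ c ∈ C, x - c ∈ m ^ n) → x ∈ C := by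
    intro x hx
    rw [hC]
    intro n
    obtain ⟨c, hc, h⟩ := hx (n + 1)
    exact hTclosed n x c ((hC c).mp hc n) h
  have hmod : ∀ c ∈ C, c ∈ m → ∀ n, ∃ e ∈ C, c - p * e ∈ m ^ (n + 2) := by
    intro c hc hcm n
    obtain ⟨d, hd, h⟩ := (hT _ _).mp ((hC c).mp hc (n + 1))
    have hdm : d ∈ m := by
      have : d = c - (c - d) := by ring
      rw [this]
      exact sub_mem hcm (Ideal.pow_le_self (by omega) h)
    obtain ⟨e, he, h2⟩ := hb n d hd hdm
    obtain ⟨e', he', h3⟩ := hdense n e ((hT _ _).mpr ⟨e, he, by simp⟩)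
    refine ⟨e', he', ?_⟩
    have : c - p * e' = (c - d) + (d - p * e) + p * (e - e') := by ring
    rw [this]
    refine add_mem (add_mem h h2) ?_
    have := Ideal.mul_mem_mul hpm h3
    rwa [← pow_succ'] at this
  refine ⟨C, hpC, hpm, ?_, ?_, fun _ => hclosed⟩
  · intro x
    obtain ⟨c, hc, h⟩ := hdense 0 x ((hT _ _).mpr ⟨x, trivial, by simp⟩)
    rw [zero_add, pow_one] at h
    exact ⟨c, hc, h⟩
  · intro c hc hcm
    by_cases hp0 : (p : D) = 0
    · refine ⟨0, zero_mem _, ?_⟩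
      rw [mul_zero]
      have hH : IsHausdorff m D := inferInstance
      apply hH.haus
      intro n
      rw [SModEq.zero, smul_eq_mul, Ideal.mul_top]
      obtain ⟨e, _, h⟩ := hmod c hc hcm n
      rw [hp0, zero_mul, sub_zero] at h
      exact Ideal.pow_le_pow_right (by omega) h
    · have hcp : ∃ e, c = p * e := by
        have hne : Ideal.span {(p : D)} ≠ ⊤ := by
          intro h
          rw [Ideal.span_singleton_eq_top] at h
          exact (mem_maximalIdeal _).mp hpm h
        have hH : IsHausdorff m (D ⧸ Ideal.span {(p : D)}) := inferInstance
        have h0 : Ideal.Quotient.mk (Ideal.span {(p : D)}) c = 0 := by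
          apply hH.haus
          intro n
          rw [SModEq.zero]
          obtain ⟨e, _, h⟩ := hmod c hc hcm n
          have h3 : Ideal.Quotient.mk (Ideal.span {(p : D)}) c = (c - p * e) • (1 : D ⧸ Ideal.span {(p : D)}) := by
            rw [Algebra.smul_def, mul_one, Ideal.Quotient.algebraMap_eq, Ideal.Quotient.eq, Ideal.mem_span_singleton]
            exact ⟨e, by ring⟩
          rw [h3]
          exact Submodule.smul_mem_smul (Ideal.pow_le_pow_right (by omega) h) trivial
        rw [Ideal.Quotient.eq_zero_iff_mem, Ideal.mem_span_singleton] at h0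
        exact h0
      obtain ⟨e, rfl⟩ := hcp
      refine ⟨e, ?_, rfl⟩
      apply hclosed
      intro n
      obtain ⟨k, hk⟩ := Ideal.exists_pow_inf_eq_pow_smul m (Ideal.span {(p : D)} : Ideal D)
      obtain ⟨e', he', h⟩ := hmod _ hc hcm (n + k)
      refine ⟨e', he', ?_⟩
      have h4 : p * e - p * e' ∈ m ^ n • (m ^ k • (⊤ : Ideal D) ⊓ Ideal.span {(p : D)}) := by
        have := hk (n + k) (by omega)
        rw [Nat.add_sub_cancel] at this
        rw [← this]
        refine ⟨?_, ?_⟩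
        · have h5 := Ideal.pow_le_pow_right (I := m) (show n + k ≤ n + k + 2 by omega) h
          rw [smul_eq_mul, Ideal.mul_top]
          exact h5
        · rw [← mul_sub]
          exact Ideal.mem_span_singleton.mpr (dvd_mul_right _ _)
      have h5 : p * e - p * e' ∈ m ^ n * Ideal.span {(p : D)} := by
        refine Ideal.mul_mono_right ?_ h4
        exact inf_le_right
      rw [Ideal.mem_mul_span_singleton] at h5
      obtain ⟨z, hz, hzp⟩ := h5
      have : e - e' = z := by
        apply mul_left_cancel₀ hp0
        linear_combination -hzp
      rw [this]; exact hz


theorem zz_coeff_0 (D : Type) [CommRing D] [IsDomain D] [IsLocalRing D] 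
    [IsAdicComplete (maximalIdeal D) D] [CharZero (ResidueField D)] : ∃ C : Subring D, zzCoeff D C 0 := by
  classical
  set P : Set (Subring D) := {N | ∀ x ∈ N, x ∈ maximalIdeal D → x = 0} with hP
  have hbot : (⊥ : Subring D) ∈ P := by
    intro x hx hxm
    obtain ⟨n, rfl⟩ := Subring.mem_bot.mp hx
    rw [← residue_eq_zero_iff, map_intCast, Int.cast_eq_zero] at hxm
    rw [hxm, Int.cast_zero]
  obtain ⟨N, -, hN⟩ := zorn_le_nonempty₀ P (by
    intro c hc hchain y hy
    refine ⟨sSup c, ?_, fun z hz => le_sSup hz⟩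
    intro x hx hxm
    obtain ⟨s, hs, hxs⟩ := (Subring.mem_sSup_of_directedOn ⟨y, hy⟩ hchain.directedOn).mp hx
    exact hc hs x hxs hxm) ⊥ hbot
  have hNP : ∀ x ∈ N, x ∈ maximalIdeal D → x = 0 := hN.prop
  have hdiv : ∀ a ∈ N, ∀ b ∈ N, b ≠ 0 → ∀ x, b * x = a → x ∈ N := by
    let N' : Subring D := 
      { carrier := {x | ∃ a ∈ N, ∃ b ∈ N, b ≠ 0 ∧ b * x = a}
        mul_mem' := by
          rintro x y ⟨a, ha, b, hb, hb0, rfl⟩ ⟨a', ha', b', hb', hb0', rfl⟩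
          exact ⟨_, mul_mem ha ha', b * b', mul_mem hb hb', mul_ne_zero hb0 hb0', by ring⟩
        one_mem' := ⟨1, one_mem _, 1, one_mem _, one_ne_zero, by ring⟩
        add_mem' := by
          rintro x y ⟨a, ha, b, hb, hb0, rfl⟩ ⟨a', ha', b', hb', hb0', rfl⟩
          exact ⟨_, add_mem (mul_mem ha hb') (mul_mem ha' hb), b * b', mul_mem hb hb', mul_ne_zero hb0 hb0', by ring⟩
        zero_mem' := ⟨0, zero_mem _, 1, one_mem _, one_ne_zero, by ring⟩
        neg_mem' := by
          rintro x ⟨a, ha, b, hb, hb0, rfl⟩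
          exact ⟨_, neg_mem ha, b, hb, hb0, by ring⟩ }
    have hN' : N' ∈ P := by
      rintro x ⟨a, ha, b, hb, hb0, rfl⟩ hxm
      have := hNP _ ha (Ideal.mul_mem_left _ _ hxm)
      exact (mul_eq_zero.mp this).resolve_left hb0
    have hle : N ≤ N' := fun x hx => ⟨x, hx, 1, one_mem _, one_ne_zero, by ring⟩
    have := hN.le_of_ge hN' hle
    intro a ha b hb hb0 x hx
    exact this ⟨a, ha, b, hb, hb0, hx⟩
  have hext : ∀ t : D, (∀ q : Polynomial N, Polynomial.aeval t q ∈ maximalIdeal D → Polynomial.aeval t q = 0) → t ∈ N := by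
    intro t ht
    let N' : Subring D := (Polynomial.aeval (R := N) t).range.toSubring
    have hN' : N' ∈ P := by
      rintro x ⟨q, rfl⟩ hxm
      exact ht q hxm
    have hle : N ≤ N' := by
      intro x hx
      refine ⟨Polynomial.C ⟨x, hx⟩, ?_⟩
      simp
      rfl
    refine hN.le_of_ge hN' hle ⟨Polynomial.X, by simp⟩
  have hfield : IsField N := by
    refine ⟨⟨0, 1, zero_ne_one⟩, mul_comm, ?_⟩
    intro a ha
    have ha0 : (a : D) ≠ 0 := fun h => ha (Subtype.ext h)
    have hu : IsUnit (a : D) := by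
      by_contra h
      exact ha0 (hNP a a.2 ((mem_maximalIdeal _).mpr h))
    obtain ⟨v, hv⟩ := hu
    refine ⟨⟨(↑v⁻¹ : D), hdiv 1 (one_mem _) a a.2 ha0 _ (by rw [← hv]; simp)⟩, ?_⟩
    apply Subtype.ext
    change (a : D) * ↑v⁻¹ = 1
    rw [← hv]; simp
  let fN : Field N := hfield.toField
  let k := ResidueField D
  have haev : ∀ (t : D) (q : Polynomial N), residue D (Polynomial.aeval t q) = Polynomial.aeval (residue D t) q := by
    intro t q
    exact (Polynomial.aeval_algebraMap_apply k t q).symm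
  have hcz : CharZero N := ⟨fun a b hab => by
    have := congrArg (fun z : N => residue D z.1) hab
    simpa using this⟩
  refine ⟨N, zero_mem _, zero_mem _, ?_, ?_, fun h => absurd rfl h⟩
  · intro x
    by_cases halg : IsAlgebraic N (residue D x)
    · have hint : IsIntegral N (residue D x) := halg.isIntegral
      set f := minpoly N (residue D x)
      have hirr : Irreducible f := minpoly.irreducible hint
      have hsep : f.Separable := hirr.separable
      have hder := hsep.aeval_derivative_ne_zero (x := residue D x) (minpoly.aeval _ _)
      have hH : HenselianRing D (maximalIdeal D) := inferInstance
      obtain ⟨t, ht, htx⟩ := hH.is_henselian (f.map (algebraMap N D)) ((minpoly.monic hint).map _) x (by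
        rw [Polynomial.eval_map_algebraMap, ← residue_eq_zero_iff, haev]
        exact minpoly.aeval _ _) (by
        rw [Polynomial.derivative_map, Polynomial.eval_map_algebraMap]
        apply IsUnit.map
        by_contra h
        apply hder
        rw [← haev]
        exact (residue_eq_zero_iff _).mpr ((mem_maximalIdeal _).mpr h))
      rw [Polynomial.IsRoot, Polynomial.eval_map_algebraMap] at ht
      have hres : residue D t = residue D x := by
        rw [← sub_eq_zero, ← map_sub]
        exact (residue_eq_zero_iff _).mpr htx
      refine ⟨t, hext t ?_, ?_⟩
      · intro q hq
        rw [← residue_eq_zero_iff, haev, hres] at hq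
        obtain ⟨g, hg⟩ := minpoly.dvd N _ hq
        rw [hg, map_mul, ht, zero_mul]
      · rw [← neg_sub]; exact neg_mem htx
    · refine ⟨x, hext x ?_, by rw [sub_self]; exact zero_mem _⟩
      intro q hq
      rw [← residue_eq_zero_iff, haev] at hq
      by_contra hne
      refine halg ⟨q, ?_, hq⟩
      rintro rfl
      simp at hne
  · intro c hc hcm
    exact ⟨0, zero_mem _, by rw [hNP c hc hcm, mul_zero]⟩

theorem zz_coeff (D : Type) [CommRing D] [IsDomain D] [IsLocalRing D] [IsNoetherianRing D]
    [IsAdicComplete (maximalIdeal D) D] : ∃ (C : Subring D) (π : D), zzCoeff D C π := by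
  obtain ⟨p, hp⟩ := CharP.exists (ResidueField D)
  rcases CharP.char_is_prime_or_zero (ResidueField D) p with h | rfl
  · obtain ⟨C, hC⟩ := zz_coeff_p D p h
    exact ⟨C, _, hC⟩
  · have := CharP.charP_to_charZero (ResidueField D)
    obtain ⟨C, hC⟩ := zz_coeff_0 D
    exact ⟨C, _, hC⟩


def zzGood (A : Type) [CommRing A] [IsDomain A] : Prop :=
  IsNoetherianRing A ∧ IsIntegrallyClosed A ∧ zzN2 A

theorem zz_coeff_complete (D : Type) [CommRing D] [IsDomain D] [IsLocalRing D] [IsNoetherianRing D]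
    [IsAdicComplete (maximalIdeal D) D] (C : Subring D) (π : D) (h : zzCoeff D C π) (hπ : π ≠ 0) :
    IsAdicComplete (Ideal.span {(⟨π, h.1⟩ : C)}) C := by
  obtain ⟨hπC, hπm, hres, hdiv, hcl⟩ := h
  replace hcl := hcl hπ
  set I : Ideal C := Ideal.span {(⟨π, hπC⟩ : C)}
  have hI : ∀ n (x : C), x ∈ I ^ n ↔ ∃ y : C, (x : D) = π ^ n * y := by
    intro n x
    rw [Ideal.span_singleton_pow, Ideal.mem_span_singleton]
    constructor
    · rintro ⟨y, rfl⟩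
      exact ⟨y, rfl⟩
    · rintro ⟨y, hy⟩
      exact ⟨y, Subtype.ext hy⟩
  have hhaus : ∀ x : D, (∀ n, x ∈ maximalIdeal D ^ n) → x = 0 := by
    intro x hx
    refine IsHausdorff.haus (I := maximalIdeal D) inferInstance x fun n => ?_
    rw [SModEq.zero, smul_eq_mul, Ideal.mul_top]
    exact hx n
  have hlim : ∀ f : ℕ → C, (∀ {m n}, m ≤ n → ∃ y : C, (f n : D) - f m = π ^ m * y) →
      ∃ L : C, ∀ n, (L : D) - f n ∈ maximalIdeal D ^ n := by
    intro f hf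
    obtain ⟨L, hL⟩ := IsPrecomplete.prec (I := maximalIdeal D) inferInstance (f := fun n => (f n : D)) (by
      intro m n hmn
      symm
      rw [SModEq.sub_mem, smul_eq_mul, Ideal.mul_top]
      obtain ⟨y, hy⟩ := hf hmn
      rw [hy]
      exact Ideal.mul_mem_right _ _ (Ideal.pow_mem_pow hπm _))
    have hL' : ∀ n, L - f n ∈ maximalIdeal D ^ n := by
      intro n
      have := (hL n).symm
      rwa [SModEq.sub_mem, smul_eq_mul, Ideal.mul_top] at this
    exact ⟨⟨L, hcl L fun n => ⟨f n, (f n).2, hL' n⟩⟩, hL'⟩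
  have hH : IsHausdorff I C := by
    refine ⟨fun x hx => ?_⟩
    apply Subtype.ext
    apply hhaus
    intro n
    have := hx n
    rw [SModEq.zero, smul_eq_mul, Ideal.mul_top, hI] at this
    obtain ⟨y, hy⟩ := this
    rw [hy]
    exact Ideal.mul_mem_right _ _ (Ideal.pow_mem_pow hπm _)
  have hP : IsPrecomplete I C := by
    refine ⟨fun f hf => ?_⟩
    have hf' : ∀ {m n}, m ≤ n → ∃ y : C, (f n : D) - f m = π ^ m * y := by
      intro m n hmn
      have := (hf hmn).symm
      rw [SModEq.sub_mem, smul_eq_mul, Ideal.mul_top, hI] at this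
      exact this
    obtain ⟨L, hL⟩ := hlim f hf'
    refine ⟨L, fun n => ?_⟩
    symm
    rw [SModEq.sub_mem, smul_eq_mul, Ideal.mul_top, hI]
    choose g hg using fun j => hf' (Nat.le_add_right n j)
    obtain ⟨G, hG⟩ := hlim g (by
      intro i j hij
      obtain ⟨y, hy⟩ := hf' (Nat.add_le_add_left hij n)
      refine ⟨y, mul_left_cancel₀ (pow_ne_zero n hπ) ?_⟩
      rw [mul_sub, ← hg, ← hg, ← mul_assoc, ← pow_add, ← hy]
      ring)
    refine ⟨G, ?_⟩
    rw [← sub_eq_zero]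
    apply hhaus
    intro j
    have e : ((L - f n : C) : D) - π ^ n * G = (L - f (n + j)) - π ^ n * (G - g j) := by
      have := hg j
      push_cast
      linear_combination this
    rw [e]
    refine sub_mem (Ideal.pow_le_pow_right (Nat.le_add_left j n) (hL _)) (Ideal.mul_mem_left _ _ (hG j))
  exact { }

theorem zz_coeff_unit (D : Type) [CommRing D] [IsDomain D] [IsLocalRing D] [IsNoetherianRing D]
    [IsAdicComplete (maximalIdeal D) D] (C : Subring D) (π : D) (h : zzCoeff D C π) (c : C) 
    (hc : (c : D) ∉ maximalIdeal D) : IsUnit c := by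
  have hcu : IsUnit (c : D) := by simpa using hc
  obtain ⟨v, hv⟩ := hcu
  obtain ⟨e, heC, he⟩ := h.2.2.1 (↑v⁻¹ : D)
  have h1 : (c : D) * e - 1 ∈ maximalIdeal D := by
    have : (c : D) * e - 1 = - (c * (↑v⁻¹ - e)) := by
      rw [mul_sub, ← hv, Units.mul_inv]; ring
    rw [this]
    exact neg_mem (Ideal.mul_mem_left _ _ he)
  obtain ⟨e', he', hee⟩ := h.2.2.2.1 _ (sub_mem (mul_mem c.2 heC) (one_mem _)) h1
  have h2 : c * ⟨e, heC⟩ = ⟨π, h.1⟩ * ⟨e', he'⟩ + 1 := by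
    apply Subtype.ext
    change (c : D) * e = π * e' + 1
    rw [← hee]; ring
  have h3 : IsUnit (c * ⟨e, heC⟩ : C) := by
    by_cases hπ : π = 0
    · rw [h2]
      have : (⟨π, h.1⟩ : C) = 0 := Subtype.ext hπ
      rw [this, zero_mul, zero_add]
      exact isUnit_one
    · have := zz_coeff_complete D C π h hπ
      have hj := IsAdicComplete.le_jacobson_bot (Ideal.span {(⟨π, h.1⟩ : C)}) (Ideal.mem_span_singleton_self _)
      rw [h2]
      exact Ideal.mem_jacobson_bot.mp hj _
  exact isUnit_of_mul_isUnit_left h3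

theorem zz_coeff_good (D : Type) [CommRing D] [IsDomain D] [IsLocalRing D] [IsNoetherianRing D]
    [IsAdicComplete (maximalIdeal D) D] (C : Subring D) (π : D) (h : zzCoeff D C π) :
    zzGood C ∧ ((π = 0 ∧ ringKrullDim C ≤ 0) ∨ (π ≠ 0 ∧ ringKrullDim C ≤ 1)) := by
  have hu := zz_coeff_unit D C π h
  by_cases hπ : π = 0
  · subst hπ
    have hf : IsField C := by
      refine ⟨⟨0, 1, zero_ne_one⟩, mul_comm, ?_⟩
      intro a ha
      have : IsUnit a := by
        apply hu
        intro hm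
        obtain ⟨e, -, he⟩ := h.2.2.2.1 a a.2 hm
        apply ha
        apply Subtype.ext
        rw [he, zero_mul]; rfl
      exact this.exists_right_inv
    refine ⟨?_, Or.inl ⟨rfl, (ringKrullDim_eq_zero_of_isField hf).le⟩⟩
    letI := hf.toField
    exact ⟨inferInstance, inferInstance, zz_N2_field C⟩
  · have hcompl := zz_coeff_complete D C π h hπ
    set p : C := ⟨π, h.1⟩ with hp
    have hp0 : p ≠ 0 := fun e => hπ (congrArg Subtype.val e)
    have hpnu : ¬ IsUnit p := by
      intro hh
      have := hh.map C.subtype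
      exact (mem_maximalIdeal _).mp h.2.1 this
    have hdvd : ∀ c : C, ¬ IsUnit c → p ∣ c := by
      intro c hc
      have : (c : D) ∈ maximalIdeal D := by
        by_contra hh
        exact hc (hu c hh)
      obtain ⟨e, he, hce⟩ := h.2.2.2.1 c c.2 this
      exact ⟨⟨e, he⟩, Subtype.ext hce⟩
    have hpp : Prime p := by
      refine ⟨hp0, hpnu, ?_⟩
      intro a b hab
      by_contra hcon
      push Not at hcon
      have ha : IsUnit a := by by_contra hh; exact hcon.1 (hdvd a hh)
      have hb : IsUnit b := by by_contra hh; exact hcon.2 (hdvd b hh)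
      exact hpnu (isUnit_of_dvd_unit hab (ha.mul hb))
    have hfac : ∀ x : C, x ≠ 0 → ∃ n : ℕ, Associated (p ^ n) x := by
      intro x hx
      have : ∃ n, ¬ p ^ n ∣ x := by
        by_contra hcon
        push Not at hcon
        apply hx
        refine IsHausdorff.haus (I := Ideal.span {p}) inferInstance x fun n => ?_
        rw [SModEq.zero, smul_eq_mul, Ideal.mul_top, Ideal.span_singleton_pow, Ideal.mem_span_singleton]
        exact hcon n
      have hfin : FiniteMultiplicity p x := by
        obtain ⟨n, hn⟩ := this
        exact ⟨n, fun hh => hn ((pow_dvd_pow _ (Nat.le_succ n)).trans hh)⟩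
      obtain ⟨c, hc, hcn⟩ := hfin.exists_eq_pow_mul_and_not_dvd
      have hcu : IsUnit c := by
        by_contra hh; exact hcn (hdvd c hh)
      refine ⟨_, hcu.unit, hc.symm⟩
    have hdvr : IsDiscreteValuationRing C := 
      IsDiscreteValuationRing.ofHasUnitMulPowIrreducibleFactorization ⟨p, hpp.irreducible, fun {x} hx => hfac x hx⟩
    refine ⟨⟨inferInstance, inferInstance, ?_⟩, Or.inr ⟨hπ, (IsDiscreteValuationRing.ringKrullDim_eq_one C).le⟩⟩
    apply zz_T C p hpp
    intro _
    have hmax : (Ideal.span {p}).IsMaximal := PrincipalIdealRing.isMaximal_of_irreducible hpp.irreducible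
    letI := Ideal.Quotient.field (Ideal.span {p})
    exact zz_N2_field _


def zzFQ (A D : Type) [CommRing A] [CommRing D] [Algebra A D] (J : Ideal D) : Prop :=
  ∃ N : Submodule A D, N.FG ∧ ∀ d : D, ∃ t ∈ N, d - t ∈ J

theorem zzFQ_of_finite (A D : Type) [CommRing A] [CommRing D] [Algebra A D] (J : Ideal D)
    [h : Module.Finite A (D ⧸ J)] : zzFQ A D J := by
  classical
  let f := (Ideal.Quotient.mkₐ A J).toLinearMap
  have hf : Function.Surjective f := Ideal.Quotient.mkₐ_surjective A J
  obtain ⟨S, hS⟩ := h.fg_top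
  choose g hg using hf
  refine ⟨Submodule.span A (g '' S), Submodule.fg_span (S.finite_toSet.image g), fun d => ?_⟩
  have : f d ∈ (Submodule.span A (g '' S)).map f := by
    rw [Submodule.map_span, ← Set.image_comp]
    have : f ∘ g = id := funext hg
    rw [this, Set.image_id, hS]
    trivial
  obtain ⟨t, ht, htd⟩ := this
  exact ⟨t, ht, Ideal.Quotient.eq.mp htd.symm⟩

theorem zz_step (A D : Type) [CommRing A] [CommRing D] [Algebra A D] [IsLocalRing D]
    (u : A) [IsAdicComplete (Ideal.span {u}) A] (J : Ideal D) [IsHausdorff (maximalIdeal D) (D ⧸ J)] (hu : algebraMap A D u ∈ maximalIdeal D)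
    (h : zzFQ A D (J ⊔ Ideal.span {algebraMap A D u})) : Module.Finite A (D ⧸ J) := by
  have hH : IsHausdorff (Ideal.span {u}) (D ⧸ J) := by
    refine ⟨fun x hx => ?_⟩
    refine IsHausdorff.haus (I := maximalIdeal D) inferInstance x fun n => ?_
    have := hx n
    rw [SModEq.zero, Ideal.span_singleton_pow, Submodule.ideal_span_singleton_smul, 
      Submodule.mem_smul_pointwise_iff_exists] at this
    obtain ⟨b, -, rfl⟩ := this
    rw [SModEq.zero, algebra_compatible_smul D (u ^ n) b, map_pow]
    exact Submodule.smul_mem_smul (Ideal.pow_mem_pow hu n) trivial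
  have hF : Module.Finite A ((D ⧸ J) ⧸ (Ideal.span {u} • ⊤ : Submodule A (D ⧸ J))) := by
    obtain ⟨N, hN, hd⟩ := h
    let f : D →ₗ[A] ((D ⧸ J) ⧸ (Ideal.span {u} • ⊤ : Submodule A (D ⧸ J))) :=
      (Submodule.mkQ _) ∘ₗ (Ideal.Quotient.mkₐ A J).toLinearMap
    have hf : Function.Surjective f := 
      (Submodule.mkQ_surjective _).comp (Ideal.Quotient.mkₐ_surjective A J)
    have : N.map f = ⊤ := by
      rw [eq_top_iff]
      intro x _
      obtain ⟨d, rfl⟩ := hf x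
      obtain ⟨t, ht, htd⟩ := hd d
      refine ⟨t, ht, ?_⟩
      rw [eq_comm, ← sub_eq_zero, ← map_sub]
      obtain ⟨j, hj, w, hw, e⟩ := Submodule.mem_sup.mp htd
      obtain ⟨w, rfl⟩ := Ideal.mem_span_singleton.mp hw
      rw [← e, map_add]
      have h1 : f j = 0 := by
        change Submodule.mkQ _ (Ideal.Quotient.mk J j) = 0
        rw [Ideal.Quotient.eq_zero_iff_mem.mpr hj, map_zero]
      have h2 : f (algebraMap A D u * w) = 0 := by
        rw [← Algebra.smul_def, map_smul, ← Submodule.Quotient.mk_out (f w)]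
        obtain ⟨z, hz⟩ := Submodule.mkQ_surjective _ (f w)
        change u • (Submodule.Quotient.mk _) = 0
        rw [← Submodule.Quotient.mk_smul, Submodule.Quotient.mk_eq_zero]
        exact Submodule.smul_mem_smul (Ideal.mem_span_singleton_self u) trivial
      rw [h1, h2, add_zero]
    exact ⟨this ▸ hN.map f⟩
  exact zz_finite_of_complete (Ideal.span {u}) (D ⧸ J)

theorem zz_dim_powerSeries (A : Type) [CommRing A] [IsDomain A] [IsNoetherianRing A] :
    ringKrullDim (PowerSeries A) ≤ ringKrullDim A + 1 := by
  have h := ringKrullDim_le_ringKrullDim_quotient_add_card ({PowerSeries.X} : Finset (PowerSeries A)) (by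
    intro x hx
    simp only [Finset.coe_singleton, Set.mem_singleton_iff] at hx
    subst hx
    have hj := IsAdicComplete.le_jacobson_bot (Ideal.span {(PowerSeries.X : PowerSeries A)}) (Ideal.mem_span_singleton_self _)
    rw [Ideal.jacobson_bot] at hj
    exact hj)
  obtain ⟨e⟩ := zz_quotX (A := A)
  rw [Finset.coe_singleton, Finset.card_singleton] at h
  rw [ringKrullDim_eq_of_ringEquiv e] at h
  exact_mod_cast h

theorem zz_tower (D : Type) [CommRing D] [IsLocalRing D] [IsNoetherianRing D] [IsAdicComplete (maximalIdeal D) D] :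
    ∀ (xs : List D) (A : Type) [CommRing A] [IsDomain A] [Algebra A D], zzGood A → 
    (∀ x ∈ xs, x ∈ maximalIdeal D) → zzFQ A D (Ideal.span {x | x ∈ xs}) → 
    ∃ (A' : Type) (_ : CommRing A') (_ : IsDomain A') (_ : Algebra A' D), zzGood A' ∧ Module.Finite A' D ∧ 
      ringKrullDim A' ≤ ringKrullDim A + xs.length
  | [], A, _, _, _, hA, _, h => by
    refine ⟨A, _, inferInstance, inferInstance, hA, ?_, by simp⟩
    obtain ⟨N, hN, hd⟩ := h
    have : N = ⊤ := by
      rw [eq_top_iff]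
      intro d _
      obtain ⟨t, ht, h⟩ := hd d
      simp at h
      rwa [sub_eq_zero.mp h]
    exact ⟨this ▸ hN⟩
  | y :: ys, A, _, _, iA, hA, hm, h => by
    have hc : IsAdicComplete (Ideal.span {y}) D := zz_complete_of_mem (maximalIdeal D) y (hm y (by simp))
    obtain ⟨ψ, h1, h2⟩ := zz_powerSeries_lift (algebraMap A D) y
    let := ψ.toAlgebra
    have hAn := hA.1
    have hAi := hA.2.1
    have htow : IsScalarTower A (PowerSeries A) D := IsScalarTower.of_algebraMap_eq (fun a => by
      rw [← h1]; rfl)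
    have hX : algebraMap (PowerSeries A) D PowerSeries.X = y := h2
    have hfin : Module.Finite (PowerSeries A) (D ⧸ Ideal.span {x | x ∈ ys}) := by
      apply zz_step (PowerSeries A) D PowerSeries.X
      · rw [hX]; exact hm y (by simp)
      · obtain ⟨N, ⟨S, hS⟩, hd⟩ := h
        refine ⟨Submodule.span _ S, Submodule.fg_span S.finite_toSet, fun d => ?_⟩
        obtain ⟨t, ht, h⟩ := hd d
        refine ⟨t, ?_, ?_⟩
        · rw [← hS] at ht
          exact Submodule.span_subset_span A (PowerSeries A) _ ht
        · rw [hX]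
          refine (Ideal.span_le.mpr ?_) h
          intro x hx
          rcases List.mem_cons.mp hx with rfl | hx
          · exact Ideal.mem_sup_right (Ideal.mem_span_singleton_self _)
          · exact Ideal.mem_sup_left (Ideal.subset_span hx)
    obtain ⟨A', i1, i2, i3, g, f, dd⟩ := zz_tower D ys (PowerSeries A) ⟨inferInstance, zz_normal_powerSeries, zz_N2_powerSeries A hA.2.2⟩ 
      (fun x hx => hm x (by simp [hx])) (zzFQ_of_finite _ _ _)
    refine ⟨A', i1, i2, i3, g, f, dd.trans ?_⟩
    grw [zz_dim_powerSeries A]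
    rw [List.length_cons, add_assoc]
    push_cast
    rw [add_comm (1 : WithBot ℕ∞)]


theorem zz_FQ_pow (D : Type) [CommRing D] [IsLocalRing D] [IsNoetherianRing D]
    (C : Subring D) (hres : ∀ x : D, ∃ c ∈ C, x - c ∈ maximalIdeal D) (n : ℕ) :
    zzFQ C D (maximalIdeal D ^ n) := by
  induction n with
  | zero => exact ⟨⊥, Submodule.fg_bot, fun d => ⟨0, zero_mem _, by simp⟩⟩
  | succ n ih =>
    obtain ⟨N, hN, hd⟩ := ih
    obtain ⟨T, hT⟩ := (IsNoetherian.noetherian (maximalIdeal D ^ n) : (maximalIdeal D ^ n).FG)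
    have key : ∀ x ∈ Submodule.span D (T : Set D), ∃ t ∈ Submodule.span C (T : Set D), x - t ∈ maximalIdeal D ^ (n+1) := by
      intro x hx
      induction hx using Submodule.span_induction with
      | mem x h => exact ⟨x, Submodule.subset_span h, by simp⟩
      | zero => exact ⟨0, zero_mem _, by simp⟩
      | add x y _ _ h1 h2 => 
        obtain ⟨t, ht, e⟩ := h1
        obtain ⟨t', ht', e'⟩ := h2
        refine ⟨t + t', add_mem ht ht', ?_⟩
        rw [add_sub_add_comm]; exact add_mem e e'
      | smul a x hx h =>
        obtain ⟨t, ht, e⟩ := h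
        obtain ⟨c, hc, hac⟩ := hres a
        refine ⟨(⟨c, hc⟩ : C) • t, Submodule.smul_mem _ _ ht, ?_⟩
        have ht' : t ∈ maximalIdeal D ^ n := by
          rw [← hT]; exact Submodule.span_subset_span C D _ ht
        have e2 : a • x - (⟨c, hc⟩ : C) • t = a * (x - t) + (a - c) * t := by
          change a * x - c * t = _
          ring
        rw [e2]
        refine add_mem (Ideal.mul_mem_left _ _ e) ?_
        rw [pow_succ']
        exact Ideal.mul_mem_mul hac ht'
    refine ⟨N ⊔ Submodule.span C (T : Set D), hN.sup (Submodule.fg_span T.finite_toSet), fun d => ?_⟩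
    obtain ⟨t, ht, e⟩ := hd d
    rw [← hT] at e
    obtain ⟨t', ht', e'⟩ := key _ e
    refine ⟨t + t', add_mem (Submodule.mem_sup_left ht) (Submodule.mem_sup_right ht'), ?_⟩
    rwa [← sub_sub]

theorem zz_sop (D : Type) [CommRing D] [IsLocalRing D] [IsNoetherianRing D] (π : D) (hπ : π ∈ maximalIdeal D) :
    ∃ xs : List D, (∀ x ∈ xs, x ∈ maximalIdeal D) ∧ (xs.length : WithBot ℕ∞) ≤ ringKrullDim (D ⧸ Ideal.span {π}) ∧
      ∃ n, maximalIdeal D ^ n ≤ Ideal.span {x | x ∈ xs} ⊔ Ideal.span {π} := by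
  have hnt : Nontrivial (D ⧸ Ideal.span {π}) := by
    apply Ideal.Quotient.nontrivial_iff.mpr
    intro h
    rw [Ideal.span_singleton_eq_top] at h
    exact (mem_maximalIdeal _).mp hπ h
  have hl : IsLocalRing (D ⧸ Ideal.span {π}) := IsLocalRing.of_surjective' (Ideal.Quotient.mk _) Ideal.Quotient.mk_surjective
  obtain ⟨s, hs, hc⟩ := Ideal.exists_finset_card_eq_height_of_isNoetherianRing (maximalIdeal (D ⧸ Ideal.span {π}))
  choose g hg using Ideal.Quotient.mk_surjective (I := Ideal.span {π})
  have hmm : ∀ d : D, d ∈ maximalIdeal D ↔ Ideal.Quotient.mk (Ideal.span {π}) d ∈ maximalIdeal (D ⧸ Ideal.span {π}) := by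
    intro d
    have : IsLocalHom (Ideal.Quotient.mk (Ideal.span {π})) := IsLocalHom.of_surjective _ Ideal.Quotient.mk_surjective
    rw [mem_maximalIdeal, mem_maximalIdeal, mem_nonunits_iff, mem_nonunits_iff, isUnit_map_iff]
  refine ⟨s.toList.map g, ?_, ?_, ?_⟩
  · intro x hx
    obtain ⟨y, hy, rfl⟩ := List.mem_map.mp hx
    rw [hmm, hg]
    exact hs.1.2 (Ideal.subset_span (by simpa using hy))
  · rw [List.length_map, Finset.length_toList, ← IsLocalRing.maximalIdeal_height_eq_ringKrullDim, ← hc]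
    rfl
  · have hrad : maximalIdeal D ≤ (Ideal.span {x | x ∈ s.toList.map g} ⊔ Ideal.span {π}).radical := by
      intro d hd
      rw [hmm] at hd
      have h1 : Ideal.Quotient.mk (Ideal.span {π}) d ∈ (Ideal.span (s : Set _)).radical := by
        rw [Ideal.radical_eq_sInf]
        refine Ideal.mem_sInf.mpr ?_
        rintro P ⟨hP1, hP2⟩
        exact hs.2 ⟨hP2, hP1⟩ (le_maximalIdeal hP2.ne_top) hd
      obtain ⟨k, hk⟩ := h1
      refine ⟨k, ?_⟩
      have h2 : Ideal.span (s : Set _) = (Ideal.span {x | x ∈ s.toList.map g}).map (Ideal.Quotient.mk (Ideal.span {π})) := by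
        rw [Ideal.map_span]
        congr 1
        ext y
        simp [hg]
      rw [h2, ← map_pow, ← Ideal.mem_comap, Ideal.comap_map_of_surjective _ Ideal.Quotient.mk_surjective,
        ← RingHom.ker_eq_comap_bot, Ideal.mk_ker] at hk
      exact hk
    exact Ideal.exists_pow_le_of_le_radical_of_fg hrad (IsNoetherian.noetherian _)

theorem zz_dim_int (A D : Type) [CommRing A] [IsDomain A] [CommRing D] [IsDomain D] [Algebra A D] [Module.Finite A D]
    [FiniteRingKrullDim D]
    (h : ringKrullDim A ≤ ringKrullDim D) : Function.Injective (algebraMap A D) := by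
  rw [injective_iff_map_eq_zero]
  intro a ha
  by_contra h0
  have h1 := ringKrullDim_succ_le_of_surjective (algebraMap A D).rangeRestrict (algebraMap A D).rangeRestrict_surjective
    (mem_nonZeroDivisors_of_ne_zero h0) (Subtype.ext ha)
  let S := (algebraMap A D).range
  have hint : Algebra.IsIntegral S D := ⟨fun x => by
    obtain ⟨p, hp, hpx⟩ := Algebra.IsIntegral.isIntegral (R := A) x
    refine ⟨p.map (algebraMap A D).rangeRestrict, hp.map _, ?_⟩
    rw [Polynomial.eval₂_map]
    exact hpx⟩
  have h2 : ringKrullDim D ≤ ringKrullDim S := by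
    apply Order.krullDim_le_of_strictMono (PrimeSpectrum.comap (algebraMap S D))
    intro P Q hPQ
    exact Ideal.IsIntegral.comap_lt_comap (R := S) (I := P.asIdeal) (J := Q.asIdeal) hPQ
  have h3 : ringKrullDim D + 1 ≤ ringKrullDim D := by
    grw [h2, h1, h]
  have h4 : ringKrullDim D ≠ ⊤ := ringKrullDim_ne_top
  have h5 : ringKrullDim D ≠ ⊥ := ringKrullDim_ne_bot
  generalize ringKrullDim D = z at h3 h4 h5
  cases z with
  | bot => exact h5 rfl
  | coe z => 
    cases z with
    | top => exact h4 rfl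
    | coe z => 
      have : ((z + 1 : ℕ) : WithBot ℕ∞) ≤ ((z : ℕ) : WithBot ℕ∞) := by exact_mod_cast h3
      have := Nat.cast_le.mp this
      omega

theorem zz_N1_of (A D : Type) [CommRing A] [IsDomain A] [CommRing D] [IsDomain D] [Algebra A D] [Module.Finite A D]
    (hinj : Function.Injective (algebraMap A D)) (hA : zzN2 A) : Module.Finite D (integralClosure D (FractionRing D)) := by
  have : FaithfulSMul A D := (faithfulSMul_iff_algebraMap_injective A D).mpr hinj
  let K := FractionRing D
  letI : Algebra (FractionRing A) K := FractionRing.liftAlgebra A K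
  have : IsScalarTower A (FractionRing A) K := FractionRing.isScalarTower_liftAlgebra A K
  have : IsLocalization (Algebra.algebraMapSubmonoid D (nonZeroDivisors A)) K :=
    inferInstance
  have : FiniteDimensional (FractionRing A) K := .of_isLocalization A D (nonZeroDivisors A)
  have h := hA K
  let f : integralClosure A K →ₗ[A] integralClosure D K :=
    { toFun := fun x => ⟨x.1, x.2.tower_top⟩
      map_add' := fun _ _ => rfl
      map_smul' := fun a x => by
        apply Subtype.ext
        rfl }
  have hf : Function.Surjective f := by
    intro x
    refine ⟨⟨x.1, isIntegral_trans (R := A) (A := D) _ x.2⟩, rfl⟩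
  have : Module.Finite A (integralClosure D K) := Module.Finite.of_surjective f hf
  exact Module.Finite.of_restrictScalars_finite A D _

theorem zz_N1 (D : Type) [CommRing D] [IsDomain D] [IsLocalRing D] [IsNoetherianRing D]
    [IsAdicComplete (maximalIdeal D) D] : Module.Finite D (integralClosure D (FractionRing D)) := by
  obtain ⟨C, π, h⟩ := zz_coeff D
  obtain ⟨hg, hdim⟩ := zz_coeff_good D C π h
  obtain ⟨xs, hxm, hlen, n, hn⟩ := zz_sop D π h.2.1
  have hF : zzFQ C D (Ideal.span {x | x ∈ xs} ⊔ Ideal.span {π}) := by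
    obtain ⟨N, hN, hd⟩ := zz_FQ_pow D C h.2.2.1 n
    refine ⟨N, hN, fun d => ?_⟩
    obtain ⟨t, ht, e⟩ := hd d
    exact ⟨t, ht, hn e⟩
  have hF2 : zzFQ C D (Ideal.span {x | x ∈ xs}) ∧ ringKrullDim C + ringKrullDim (D ⧸ Ideal.span {π}) ≤ ringKrullDim D := by
    rcases hdim with ⟨rfl, hd⟩ | ⟨hπ, hd⟩
    · constructor
      · simpa using hF
      · grw [hd, ringKrullDim_quotient_le, zero_add]
    · constructor
      · have := zz_coeff_complete D C π h hπ
        have := zz_step C D ⟨π, h.1⟩ (Ideal.span {x | x ∈ xs}) h.2.1 hF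
        exact zzFQ_of_finite _ _ _
      · grw [hd, add_comm]
        exact ringKrullDim_quotient_succ_le_of_nonZeroDivisor (mem_nonZeroDivisors_of_ne_zero hπ)
  obtain ⟨A, _, _, _, hA, hfin, hdA⟩ := zz_tower D xs C hg hxm hF2.1
  refine zz_N1_of A D (zz_dim_int A D (hdA.trans ?_)) hA.2.2
  grw [hlen, hF2.2]


theorem zz_hat_haus (R : Type) [CommRing R] [IsLocalRing R] [IsNoetherianRing R] (J : Ideal R) :
    IsHausdorff (maximalIdeal (AdicCompletion (maximalIdeal R) R)) 
      (AdicCompletion (maximalIdeal R) R ⧸ J.map (algebraMap R (AdicCompletion (maximalIdeal R) R))) := by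
  set D := AdicCompletion (maximalIdeal R) R
  have h1 : IsHausdorff (maximalIdeal D) (AdicCompletion (maximalIdeal R) (R ⧸ J)) := by
    rw [AdicCompletion.maximalIdeal_eq_map, IsHausdorff.map_algebraMap_iff]
    infer_instance
  let g : (D ⧸ J.map (algebraMap R D)) →ₗ[D] AdicCompletion (maximalIdeal R) (R ⧸ J) :=
    (AdicCompletion.ofTensorProduct (maximalIdeal R) (R ⧸ J)) ∘ₗ 
      (Algebra.TensorProduct.quotIdealMapEquivTensorQuot D J).toLinearMap
  have hg : Function.Injective g := 
    (AdicCompletion.ofTensorProduct_bijective_of_finite_of_isNoetherian (maximalIdeal R) (R ⧸ J)).1.comp 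
      (Algebra.TensorProduct.quotIdealMapEquivTensorQuot D J).injective
  refine ⟨fun x hx => hg ?_⟩
  rw [map_zero]
  refine IsHausdorff.haus h1 _ fun n => ?_
  have := hx n
  rw [SModEq.zero] at this ⊢
  have h2 := Submodule.mem_map_of_mem (f := g) this
  rw [Submodule.map_smul''] at h2
  exact Submodule.smul_mono le_rfl le_top h2

theorem zz_hat_tower (R : Type) [CommRing R] [IsLocalRing R] [IsNoetherianRing R] :
    ∀ (xs : List R) (A : Type) [CommRing A] [IsNoetherianRing A] [Algebra A (AdicCompletion (maximalIdeal R) R)], 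
    (∀ x ∈ xs, x ∈ maximalIdeal R) → zzFQ A (AdicCompletion (maximalIdeal R) R) 
      ((Ideal.span {x | x ∈ xs}).map (algebraMap R (AdicCompletion (maximalIdeal R) R))) → 
    IsNoetherianRing (AdicCompletion (maximalIdeal R) R)
  | [], A, _, _, _, _, h => by
    have : Module.Finite A (AdicCompletion (maximalIdeal R) R) := by
      obtain ⟨N, hN, hd⟩ := h
      have : N = ⊤ := by
        rw [eq_top_iff]
        intro d _
        obtain ⟨t, ht, h⟩ := hd d
        have h' : d - t = 0 := by simpa using h
        rwa [sub_eq_zero.mp h']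
      exact ⟨this ▸ hN⟩
    exact IsNoetherianRing.of_finite A _
  | y :: ys, A, _, _, iA, hm, h => by
    set D := AdicCompletion (maximalIdeal R) R
    have hym : algebraMap R D y ∈ maximalIdeal D := by
      rw [AdicCompletion.maximalIdeal_eq_map]
      exact Ideal.mem_map_of_mem _ (hm y (by simp))
    have hc : IsAdicComplete (Ideal.span {algebraMap R D y}) D := zz_complete_of_mem (maximalIdeal D) _ hym
    obtain ⟨ψ, h1, h2⟩ := zz_powerSeries_lift (algebraMap A D) (algebraMap R D y)
    let := ψ.toAlgebra
    have htow : IsScalarTower A (PowerSeries A) D := IsScalarTower.of_algebraMap_eq (fun a => by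
      rw [← h1]; rfl)
    have hX : algebraMap (PowerSeries A) D PowerSeries.X = algebraMap R D y := h2
    have hfin : Module.Finite (PowerSeries A) (D ⧸ (Ideal.span {x | x ∈ ys}).map (algebraMap R D)) := by
      have := zz_hat_haus R (Ideal.span {x | x ∈ ys})
      apply zz_step (PowerSeries A) D PowerSeries.X
      · rw [hX]; exact hym
      · obtain ⟨N, ⟨S, hS⟩, hd⟩ := h
        refine ⟨Submodule.span _ S, Submodule.fg_span S.finite_toSet, fun d => ?_⟩
        obtain ⟨t, ht, h⟩ := hd d
        refine ⟨t, ?_, ?_⟩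
        · rw [← hS] at ht
          exact Submodule.span_subset_span A (PowerSeries A) _ ht
        · rw [hX]
          rw [Ideal.map_span] at h
          refine (Ideal.span_le.mpr ?_) h
          rintro _ ⟨x, hx, rfl⟩
          rcases List.mem_cons.mp hx with rfl | hx
          · exact Ideal.mem_sup_right (Ideal.mem_span_singleton_self _)
          · exact Ideal.mem_sup_left (Ideal.mem_map_of_mem _ (Ideal.subset_span hx))
    exact zz_hat_tower R ys (PowerSeries A)
      (fun x hx => hm x (by simp [hx])) (zzFQ_of_finite _ _ _)

theorem zz_hat_noeth (R : Type) [CommRing R] [IsLocalRing R] [IsNoetherianRing R] :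
    IsNoetherianRing (AdicCompletion (maximalIdeal R) R) := by
  obtain ⟨S, hS⟩ := (IsNoetherian.noetherian (maximalIdeal R) : (maximalIdeal R).FG)
  have hspan : Ideal.span {x | x ∈ S.toList} = maximalIdeal R := by
    rw [← hS]; simp [Ideal.span]
  refine zz_hat_tower R S.toList R ?_ ?_
  · intro x hx
    rw [← hS]; exact Submodule.subset_span (by simpa using hx)
  · rw [hspan]
    refine ⟨Submodule.span R {1}, Submodule.fg_span_singleton 1, fun d => ?_⟩
    obtain ⟨r, hr⟩ := Ideal.Quotient.mk_surjective (AdicCompletion.evalOneₐ (maximalIdeal R) d)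
    refine ⟨algebraMap R _ r, Submodule.mem_span_singleton.mpr ⟨r, by rw [Algebra.smul_def, mul_one]⟩, ?_⟩
    rw [← AdicCompletion.ker_evalOneₐ_eq_map _ (IsNoetherian.noetherian _)]
    rw [RingHom.mem_ker, map_sub, sub_eq_zero]
    change AdicCompletion.evalOneₐ _ d = AdicCompletion.evalOneₐ _ (algebraMap R _ r)
    rw [← hr, AlgHom.commutes]
    rfl

theorem zz_quot_complete (D : Type) [CommRing D] [IsLocalRing D] [IsNoetherianRing D] 
    [IsAdicComplete (maximalIdeal D) D] (P : Ideal D) [P.IsPrime] [IsLocalRing (D ⧸ P)] :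
    IsAdicComplete (maximalIdeal (D ⧸ P)) (D ⧸ P) := by
  have hm : maximalIdeal (D ⧸ P) = (maximalIdeal D).map (algebraMap D (D ⧸ P)) := by
    symm
    have : (maximalIdeal D).map (Ideal.Quotient.mk P) = maximalIdeal (D ⧸ P) := by
      apply IsLocalRing.eq_maximalIdeal
      apply Ideal.IsMaximal.map_of_surjective_of_ker_le Ideal.Quotient.mk_surjective
      rw [Ideal.mk_ker]
      exact le_maximalIdeal (Ideal.IsPrime.ne_top ‹_›)
    exact this
  have h1 : IsPrecomplete (maximalIdeal D) (D ⧸ P) := by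
    rw [← AdicCompletion.of_surjective_iff]
    have h2 : Function.Surjective (AdicCompletion.map (maximalIdeal D) P.mkQ) := 
      AdicCompletion.map_surjective _ (Submodule.mkQ_surjective P)
    intro z
    obtain ⟨w, rfl⟩ := h2 z
    obtain ⟨d, rfl⟩ := AdicCompletion.of_surjective (maximalIdeal D) D w
    exact ⟨P.mkQ d, by rw [AdicCompletion.map_of]⟩
  have h3 : IsPrecomplete (maximalIdeal (D ⧸ P)) (D ⧸ P) := by
    rw [hm, IsPrecomplete.map_algebraMap_iff]; exact h1
  exact { }


open TensorProduct in
theorem zz_descent (R S : Type) [CommRing R] [CommRing S] [Algebra R S]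
    [Module.FaithfullyFlat R S] [IsNoetherianRing S] [IsReduced S]
    (hN : ∀ P : Ideal S, P.IsPrime →
      Module.Finite (S ⧸ P) (integralClosure (S ⧸ P) (FractionRing (S ⧸ P)))) :
    Module.Finite R (integralClosure R (FractionRing R)) := by
  have key : ∀ P : minimalPrimes S, ∃ f : (S ⊗[R] (integralClosure R (FractionRing R))) →ₗ[S]
      FractionRing (S ⧸ P.1), (LinearMap.range f).FG ∧
      (∀ s : S, f (s ⊗ₜ 1) = algebraMap S _ s) := by
    rintro ⟨P, hP⟩
    have hPp : P.IsPrime := hP.1.1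
    have hu : ∀ y : nonZeroDivisors R, IsUnit (Algebra.ofId R (FractionRing (S ⧸ P)) y) := by
      rintro ⟨y, hy⟩
      rw [isUnit_iff_ne_zero]
      change algebraMap R (FractionRing (S ⧸ P)) y ≠ 0
      rw [IsScalarTower.algebraMap_apply R S, IsScalarTower.algebraMap_apply S (S ⧸ P)]
      intro h
      rw [FaithfulSMul.algebraMap_eq_zero_iff] at h
      have h1 : algebraMap R S y ∈ P := by
        rwa [Ideal.Quotient.algebraMap_eq, Ideal.Quotient.eq_zero_iff_mem] at h
      refine Set.disjoint_left.mp (Ideal.disjoint_nonZeroDivisors_of_mem_minimalPrimes hP) h1 ?_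
      have h2 : IsSMulRegular S y := by
        have : IsSMulRegular R y := by
          intro a b hab
          have := (mem_nonZeroDivisors_iff.mp hy).1 (a - b) (by
            simpa [mul_sub, sub_eq_zero] using hab)
          exact sub_eq_zero.mp this
        have h' := this.of_flat (S := S)
        intro a b hab
        exact h' (by simpa [Algebra.smul_def] using hab)
      rw [SetLike.mem_coe, mem_nonZeroDivisors_iff_right]
      intro z hz
      exact h2 (by simpa [Algebra.smul_def, mul_comm] using hz)
    let φ : FractionRing R →ₐ[R] FractionRing (S ⧸ P) := IsLocalization.liftAlgHom hu
    let f : (S ⊗[R] (integralClosure R (FractionRing R))) →ₐ[S] FractionRing (S ⧸ P) :=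
      Algebra.TensorProduct.lift (Algebra.ofId S _)
        (φ.comp (integralClosure R (FractionRing R)).val) (fun _ _ => Commute.all _ _)
    have hf : ∀ s b, f (s ⊗ₜ b) = algebraMap S _ s * φ b := fun s b => rfl
    refine ⟨f.toLinearMap, ?_, fun s => ?_⟩
    · have hle : LinearMap.range f.toLinearMap ≤ 
        (Subalgebra.toSubmodule (integralClosure (S ⧸ P) (FractionRing (S ⧸ P)))).restrictScalars S := by
        rintro _ ⟨t, rfl⟩
        induction t using TensorProduct.induction_on with
        | zero => simp
        | add x y hx hy => rw [map_add]; exact Submodule.add_mem _ hx hy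
        | tmul s b =>
          change f (s ⊗ₜ b) ∈ integralClosure (S ⧸ P) (FractionRing (S ⧸ P))
          rw [hf]
          refine Subalgebra.mul_mem _ ?_ ?_
          · rw [IsScalarTower.algebraMap_apply S (S ⧸ P)]
            exact Subalgebra.algebraMap_mem _ _
          · have : IsIntegral R (φ b) := IsIntegral.map φ b.2
            exact this.tower_top
      have hfg : ((Subalgebra.toSubmodule (integralClosure (S ⧸ P) (FractionRing (S ⧸ P)))).restrictScalars S).FG := by
        refine Submodule.FG.restrictScalars_of_surjective ?_ Ideal.Quotient.mk_surjective
        exact Module.Finite.iff_fg.mp (hN P hPp)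
      have : IsNoetherian S ((Subalgebra.toSubmodule (integralClosure (S ⧸ P) (FractionRing (S ⧸ P)))).restrictScalars S) :=
        isNoetherian_of_fg_of_noetherian _ hfg
      exact (isNoetherian_submodule.mp this) _ hle
    · change f (s ⊗ₜ 1) = _
      rw [hf]; simp
  choose f hfg hf1 using key
  have hfin : Finite (minimalPrimes S) := minimalPrimes.finite_of_isNoetherianRing S
  let F := LinearMap.pi f
  have hreg : ∀ y ∈ nonZeroDivisors R, ∀ t : (S ⊗[R] (integralClosure R (FractionRing R))),
      y • t = 0 → t = 0 := by
    intro y hy t ht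
    have h1 : Function.Injective (LinearMap.lsmul R (integralClosure R (FractionRing R)) y) := by
      rw [← LinearMap.ker_eq_bot, LinearMap.ker_eq_bot']
      intro b hb
      have hb' : algebraMap R (FractionRing R) y * b.1 = 0 := by
        have := congrArg Subtype.val hb
        simpa [Algebra.smul_def] using this
      exact Subtype.ext (((IsLocalization.map_units (FractionRing R) ⟨y, hy⟩).mul_right_eq_zero).mp hb')
    have h2 := Module.Flat.lTensor_preserves_injective_linearMap (M := S) _ h1
    apply h2
    rw [map_zero, ← ht]
    clear ht
    induction t using TensorProduct.induction_on with
    | zero => simp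
    | add x y hx hy => rw [map_add, hx, hy, smul_add]
    | tmul s b => simp
  have hden : ∀ t : (S ⊗[R] (integralClosure R (FractionRing R))), ∃ y ∈ nonZeroDivisors R, ∃ s : S,
      y • t = s ⊗ₜ 1 := by
    intro t
    induction t using TensorProduct.induction_on with
    | zero => exact ⟨1, one_mem _, 0, by simp⟩
    | add x y hx hy => 
      obtain ⟨a, ha, s, hs⟩ := hx
      obtain ⟨b, hb, t, ht⟩ := hy
      refine ⟨a * b, mul_mem ha hb, b • s + a • t, ?_⟩
      rw [smul_add, mul_smul, mul_smul, smul_comm a b x, hs, ht, TensorProduct.add_tmul, TensorProduct.smul_tmul',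
        TensorProduct.smul_tmul']
    | tmul s b =>
      obtain ⟨⟨r, y⟩, h⟩ := IsLocalization.surj (nonZeroDivisors R) b.1
      refine ⟨y, y.2, r • s, ?_⟩
      have : (y : R) • b = r • 1 := by
        apply Subtype.ext
        change (y : R) • b.1 = r • (1 : FractionRing R)
        rw [Algebra.smul_def, Algebra.smul_def, mul_one, mul_comm]
        exact h
      rw [← TensorProduct.tmul_smul, this, TensorProduct.tmul_smul, TensorProduct.smul_tmul']
  have hFinj : Function.Injective F := by
    rw [← LinearMap.ker_eq_bot, LinearMap.ker_eq_bot']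
    intro t ht
    obtain ⟨y, hy, s, hs⟩ := hden t
    apply hreg y hy
    rw [hs]
    have hs0 : s = 0 := by
      have : s ∈ nilradical S := by
        rw [nilradical, ← Ideal.sInf_minimalPrimes, Ideal.mem_sInf]
        intro P hP
        change P ∈ minimalPrimes S at hP
        have hPp : P.IsPrime := hP.1.1
        have h3 : f ⟨P, hP⟩ (s ⊗ₜ 1) = 0 := by
          rw [← hs, ← algebraMap_smul S y t, map_smul]
          have := congrFun ht ⟨P, hP⟩
          change f ⟨P, hP⟩ t = 0 at this
          rw [this, smul_zero]
        rw [hf1, IsScalarTower.algebraMap_apply S (S ⧸ P), FaithfulSMul.algebraMap_eq_zero_iff] at h3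
        rwa [Ideal.Quotient.algebraMap_eq, Ideal.Quotient.eq_zero_iff_mem] at h3
      rw [nilradical_eq_zero] at this
      simpa using this
    rw [hs0, TensorProduct.zero_tmul]
  have hFfg : (LinearMap.range F).FG := by
    have h4 : (Submodule.pi Set.univ (fun P => LinearMap.range (f P))).FG := Submodule.fg_pi hfg
    have : IsNoetherian S (Submodule.pi Set.univ (fun P => LinearMap.range (f P))) :=
        isNoetherian_of_fg_of_noetherian _ h4
    refine (isNoetherian_submodule.mp this) _ ?_
    rintro _ ⟨t, rfl⟩ P _
    exact ⟨t, rfl⟩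
  have hT : Module.Finite S (S ⊗[R] (integralClosure R (FractionRing R))) := by
    have : Module.Finite S (LinearMap.range F) := Module.Finite.iff_fg.mpr hFfg
    exact Module.Finite.equiv (LinearEquiv.ofInjective F hFinj).symm
  exact Module.Finite.of_finite_tensorProduct_of_faithfullyFlat S

theorem zz_finite (R : Type) [CommRing R] [IsLocalRing R] [IsNoetherianRing R]
    (h : IsReduced (AdicCompletion (maximalIdeal R) R)) :
    Module.Finite R (integralClosure R (FractionRing R)) := by
  have := zz_hat_noeth R
  have : Module.FaithfullyFlat R (AdicCompletion (maximalIdeal R) R) :=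
    Module.FaithfullyFlat.of_flat_of_isLocalHom
  have hm : maximalIdeal (AdicCompletion (maximalIdeal R) R) = (maximalIdeal R).map (algebraMap R _) :=
    AdicCompletion.maximalIdeal_eq_map
  have : IsAdicComplete (maximalIdeal (AdicCompletion (maximalIdeal R) R)) (AdicCompletion (maximalIdeal R) R) := by
    rw [hm, IsAdicComplete.map_algebraMap_iff]
    exact AdicCompletion.isAdicComplete (IsNoetherian.noetherian _)
  refine zz_descent R (AdicCompletion (maximalIdeal R) R) (fun P hP => ?_)
  have : IsLocalRing (AdicCompletion (maximalIdeal R) R ⧸ P) :=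
    IsLocalRing.of_surjective' _ Ideal.Quotient.mk_surjective
  have := zz_quot_complete _ P
  exact zz_N1 _


abbrev zzE (R : Type) [CommRing R] (M : Type) [AddCommGroup M] [Module R M]
    (N : Type) [AddCommGroup N] [Module R N] (i : ℕ) : Type :=
  CategoryTheory.Abelian.Ext.{0} (ModuleCat.of R M) (ModuleCat.of R N) i

theorem zz_bridge (R : Type) [CommRing R] (M : Type) [AddCommGroup M] [Module R M]
    (N : Type) [AddCommGroup N] [Module R N] (i : ℕ)
    (h : Subsingleton ↥(((Ext R (ModuleCat.{0} R) (i+1)).obj (Opposite.op (ModuleCat.of R M))).obj (ModuleCat.of R N))) :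
    Subsingleton (zzE R M N (i+1)) := by
  let P := projectiveResolution (ModuleCat.of R M)
  have h1 : Limits.IsZero ((P.complex.linearYonedaObj R (ModuleCat.of R N)).homology (i+1)) := by
    refine Limits.IsZero.of_iso ?_ (P.isoExt (R := R) (i+1) (ModuleCat.of R N)).symm
    exact ModuleCat.isZero_of_subsingleton _
  rw [← HomologicalComplex.exactAt_iff_isZero_homology, HomologicalComplex.exactAt_iff' _ i (i+1) (i+2) (by simp) (by simp)] at h1
  rw [ShortComplex.moduleCat_exact_iff] at h1
  refine subsingleton_of_forall_eq 0 fun e => ?_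
  obtain ⟨f, hf, rfl⟩ := P.extMk_surjective e (i+2) rfl
  rw [P.extMk_eq_zero_iff _ _ _ _ i rfl]
  obtain ⟨g, hg⟩ := h1 f hf
  exact ⟨g, hg⟩

theorem zz_shift (R : Type) [CommRing R] (M F : Type) [AddCommGroup M] [Module R M]
    [AddCommGroup F] [Module R F] [Module.Projective R F] (φ : F →ₗ[R] M) (hφ : Function.Surjective φ)
    (N : Type) [AddCommGroup N] [Module R N] (i : ℕ)
    (h : Subsingleton (zzE R M N (i+2))) : Subsingleton (zzE R (LinearMap.ker φ) N (i+1)) := by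
  have hS := LinearMap.shortExact_shortComplexKer hφ
  have : Projective (ModuleCat.of R F) := (IsProjective.iff_projective (R := R) F).mp inferInstance
  refine subsingleton_of_forall_eq 0 fun e => ?_
  obtain ⟨x₂, hx⟩ := Abelian.Ext.contravariant_sequence_exact₁ hS (ModuleCat.of R N) e (n₁ := i+2) (by omega)
    (Subsingleton.elim (α := zzE R M N (i+2)) _ _)
  rw [← hx]
  have h0 : x₂ = 0 := Abelian.Ext.eq_zero_of_projective x₂
  rw [h0, Abelian.Ext.comp_zero]

theorem zz_lift (R : Type) [CommRing R] (M L Q : Type) [AddCommGroup M] [Module R M]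
    [AddCommGroup L] [Module R L] [AddCommGroup Q] [Module R Q] (φ : L →ₗ[R] Q) (hφ : Function.Surjective φ)
    (h : Subsingleton (zzE R M (LinearMap.ker φ) 1)) (f : M →ₗ[R] Q) :
    ∃ g : M →ₗ[R] L, φ ∘ₗ g = f := by
  have hS := LinearMap.shortExact_shortComplexKer hφ
  obtain ⟨x₂, hx⟩ := Abelian.Ext.covariant_sequence_exact₃ (ModuleCat.of R M) hS
    (Abelian.Ext.mk₀ (ModuleCat.ofHom f)) (n₁ := 1) (by omega)
    (Subsingleton.elim (α := zzE R M (LinearMap.ker φ) 1) _ _)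
  obtain ⟨g, rfl⟩ := Abelian.Ext.homEquiv₀.symm.surjective x₂
  rw [Abelian.Ext.homEquiv₀_symm_apply, Abelian.Ext.mk₀_comp_mk₀] at hx
  have h2 := (Abelian.Ext.mk₀_bijective _ _).1 hx
  refine ⟨g.hom, ?_⟩
  exact congrArg ModuleCat.Hom.hom h2


open TensorProduct in
theorem zz_tmul_surj (A : Type) [CommRing A] [IsLocalRing A] (K : Type) [AddCommGroup K] [Module A K]
    (z : ResidueField A ⊗[A] K) : ∃ e : K, z = 1 ⊗ₜ e := by
  induction z using TensorProduct.induction_on with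
  | zero => exact ⟨0, by simp⟩
  | add x y hx hy =>
    obtain ⟨e, rfl⟩ := hx
    obtain ⟨f, rfl⟩ := hy
    exact ⟨e + f, by rw [TensorProduct.tmul_add]⟩
  | tmul a e =>
    obtain ⟨a, rfl⟩ := IsLocalRing.residue_surjective a
    refine ⟨a • e, ?_⟩
    rw [← TensorProduct.smul_tmul, Algebra.smul_def, mul_one]
    rfl

open TensorProduct in
theorem zz_tmul_zero (A : Type) [CommRing A] [IsLocalRing A] (K : Type) [AddCommGroup K] [Module A K]
    (e : K) : (1 : ResidueField A) ⊗ₜ[A] e = 0 ↔ e ∈ (maximalIdeal A) • (⊤ : Submodule A K) := by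
  have h := LinearMap.ker_tensorProductMk (R := A) (Q := K) (I := maximalIdeal A)
  rw [← h]
  rfl

theorem zz_freeG (A : Type) [CommRing A] [IsLocalRing A] (x s : A) (hs : ¬ x ∣ s)
    (hsx : ∀ y ∈ maximalIdeal A, x ∣ s * y)
    (K F M : Type) [AddCommGroup K] [Module A K] [AddCommGroup F] [Module A F] 
    [AddCommGroup M] [Module A M] [Module.Finite A K] [Module.Free A K] [Module.Finite A F] [Module.Free A F]
    (i : K →ₗ[A] F) (g : F →ₗ[A] M) (hi : Function.Injective i) (hg : Function.Surjective g)
    (hex : Function.Exact i g) (hM : ∀ m : M, x • m = 0 → m = 0) : Module.Free A M := by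
  have : Module.Finite A M := Module.Finite.of_surjective g hg
  refine Module.free_of_lTensor_residueField_injective i g hg hex ?_
  rw [← LinearMap.ker_eq_bot, LinearMap.ker_eq_bot']
  intro z hz
  obtain ⟨e, rfl⟩ := zz_tmul_surj A K z
  rw [LinearMap.lTensor_tmul, zz_tmul_zero] at hz
  rw [zz_tmul_zero]
  have h1 : ∃ f : F, s • i e = x • f := by
    refine Submodule.smul_induction_on hz ?_ ?_
    · intro r hr n _
      obtain ⟨c, hc⟩ := hsx r hr
      exact ⟨c • n, by rw [smul_smul, smul_smul, hc]⟩
    · rintro a b ⟨f, hf⟩ ⟨f', hf'⟩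
      exact ⟨f + f', by rw [smul_add, smul_add, hf, hf']⟩
  obtain ⟨f, hf⟩ := h1
  have h2 : g f = 0 := by
    apply hM
    rw [← map_smul, ← hf, map_smul, hex.apply_apply_eq_zero, smul_zero]
  obtain ⟨e', rfl⟩ := (hex f).mp h2
  rw [← map_smul, ← map_smul] at hf
  have hf := hi hf
  let b := Module.Free.chooseBasis A K
  rw [← b.sum_repr e]
  refine Submodule.sum_mem _ fun j _ => Submodule.smul_mem_smul ?_ trivial
  rw [IsLocalRing.mem_maximalIdeal, mem_nonunits_iff]
  intro hu
  have h3 := congrArg (fun t => b.repr t j) hf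
  simp only [map_smul, Finsupp.smul_apply, smul_eq_mul] at h3
  apply hs
  obtain ⟨v, hv⟩ := hu.exists_right_inv
  refine ⟨b.repr e' j * v, ?_⟩
  calc s = s * (b.repr e j * v) := by rw [hv, mul_one]
    _ = _ := by rw [← mul_assoc, h3, mul_assoc]

open TensorProduct in
theorem zz_freeF (A : Type) [CommRing A] [IsLocalRing A] (M : Type) [AddCommGroup M] [Module A M]
    [Module.Finite A M] (h : ∀ f : M →ₗ[A] ResidueField A, ∃ g : M →ₗ[A] A, ∀ m, residue A (g m) = f m) :
    Module.Free A M := by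
  let b := Module.finBasis (ResidueField A) (ResidueField A ⊗[A] M)
  let f : ∀ j, M →ₗ[A] ResidueField A := fun j =>
    ((b.coord j).restrictScalars A) ∘ₗ (TensorProduct.mk A (ResidueField A) M 1)
  choose g hg using fun j => h (f j)
  have h1 : ∃ l', l' ∘ₗ (LinearMap.pi g) = LinearMap.id := by
    rw [IsLocalRing.split_injective_iff_lTensor_residueField_injective]
    rw [← LinearMap.ker_eq_bot, LinearMap.ker_eq_bot']
    intro z hz
    obtain ⟨e, rfl⟩ := zz_tmul_surj A M z
    apply b.ext_elem
    intro j
    have : residue A (g j e) = 0 := by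
      rw [LinearMap.lTensor_tmul] at hz
      have h4 := congrArg (LinearMap.lTensor (ResidueField A) (LinearMap.proj j)) hz
      rw [LinearMap.lTensor_tmul, map_zero, zz_tmul_zero] at h4
      rw [IsLocalRing.residue_eq_zero_iff]
      simpa using h4
    rw [hg] at this
    rw [map_zero]
    exact this
  obtain ⟨l', hl'⟩ := h1
  have : Module.Projective A M := Module.Projective.of_split _ _ hl'
  exact Module.free_of_flat_of_isLocalRing

theorem zz_min (R : Type) [CommRing R] (I p : Ideal R) (hI : I.IsRadical) (hp : p ∈ I.minimalPrimes) (y : R)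
    (hy : y ∈ p) : ∃ u ∉ p, u * y ∈ I := by
  have hpp : p.IsPrime := hp.1.1
  by_contra! hcon
  have hd : Disjoint (I : Set R) (p.primeCompl ⊔ Submonoid.powers y : Submonoid R) := by
    rw [Set.disjoint_left]
    intro a ha ha'
    obtain ⟨u, hu, z, ⟨n, rfl⟩, rfl⟩ := Submonoid.mem_sup.mp ha'
    refine hcon u hu (hI ⟨n + 1, ?_⟩)
    have : (u * y) ^ (n+1) = (u ^ n * y) * (u * y ^ n) := by ring
    rw [this]
    exact I.mul_mem_left _ ha
  obtain ⟨q, hq, hIq, hqd⟩ := Ideal.exists_le_prime_disjoint I _ hd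
  have hqp : q ≤ p := by
    intro a ha
    by_contra hap
    exact Set.disjoint_left.mp hqd ha (Submonoid.mem_sup_left (show a ∈ p.primeCompl from hap))
  have := hp.2 ⟨hq, hIq⟩ hqp hy
  exact Set.disjoint_left.mp hqd this (Submonoid.mem_sup_right (Submonoid.mem_powers y))

theorem zz_min_all (R : Type) [CommRing R] [IsNoetherianRing R] (I p : Ideal R) (hI : I.IsRadical) (hp : p ∈ I.minimalPrimes) :
    ∃ u ∉ p, ∀ y ∈ p, u * y ∈ I := by
  have hpp : p.IsPrime := hp.1.1
  classical
  obtain ⟨S, hS⟩ := (IsNoetherian.noetherian p : p.FG)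
  choose! u hu hu' using zz_min R I p hI hp
  refine ⟨∏ y ∈ S, u y, ?_, ?_⟩
  · rw [hpp.prod_mem_iff]
    rintro ⟨y, hy, h⟩
    exact hu y (hS ▸ Submodule.subset_span hy) h
  · intro y hy
    rw [← hS] at hy
    refine Submodule.span_induction ?_ ?_ ?_ ?_ hy
    · intro z hz
      have hz' : z ∈ S := hz
      rw [← Finset.mul_prod_erase _ _ hz', mul_comm (u z), mul_assoc]
      exact I.mul_mem_left _ (hu' z (hS ▸ Submodule.subset_span hz))
    · simp
    · intro a b _ _ ha hb; rw [mul_add]; exact I.add_mem ha hb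
    · intro a b _ hb; rw [smul_eq_mul, mul_left_comm]; exact I.mul_mem_left _ hb


open TensorProduct in
theorem zz_base (R : Type) [CommRing R] (c p : Ideal R) [p.IsPrime] (hcp : c ≤ p)
    (u : R) (hu : u ∉ p) (hup : ∀ y ∈ p, u * y ∈ c) (M : Type) [AddCommGroup M] [Module R M]
    [Module.Finite R M] (hl : ∀ f : M →ₗ[R] R ⧸ c, ∃ g : M →ₗ[R] R, c.mkQ ∘ₗ g = f) :
    Module.Free (Localization.AtPrime p) (Localization.AtPrime p ⊗[R] M) := by
  apply zz_freeF
  intro f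
  obtain ⟨S, hS⟩ := (Module.Finite.fg_top : (⊤ : Submodule R M).FG)
  choose a ha using fun m : M => IsLocalRing.residue_surjective (f (1 ⊗ₜ m))
  obtain ⟨⟨t, ht⟩, hta⟩ := IsLocalization.exist_integer_multiples p.primeCompl S a
  let k := ResidueField (Localization.AtPrime p)
  let L : R →ₗ[R] k := Algebra.linearMap R k
  have hL : ∀ r : R, L r = residue (Localization.AtPrime p) (algebraMap R _ r) := fun r => rfl
  let f0 : M →ₗ[R] k := (f.restrictScalars R) ∘ₗ (TensorProduct.mk R (Localization.AtPrime p) M 1)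
  have hf0 : ∀ m, f0 m = f (1 ⊗ₜ m) := fun m => rfl
  have hrange : ∀ m, (t • f0) m ∈ LinearMap.range L := by
    intro m
    have hm : m ∈ Submodule.span R (S : Set M) := by rw [hS]; trivial
    refine Submodule.span_induction ?_ ?_ ?_ ?_ hm
    · intro z hz
      obtain ⟨r, hr⟩ := hta z hz
      refine ⟨r, ?_⟩
      rw [hL, hr, LinearMap.smul_apply, hf0, ← ha z, Algebra.smul_def, map_mul, Algebra.smul_def]
      rfl
    · rw [map_zero]; exact zero_mem _
    · intro a b _ _ ha hb; rw [map_add]; exact add_mem ha hb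
    · intro a b _ hb; rw [map_smul]; exact Submodule.smul_mem _ _ hb
  have hker : ∀ r, L r = 0 ↔ r ∈ p := by
    intro r
    rw [hL, residue_eq_zero_iff, IsLocalization.AtPrime.to_map_mem_maximal_iff _ p]
  have hle : LinearMap.ker L ≤ Submodule.comap (LinearMap.lsmul R R u) c := by
    intro y hy
    exact hup y ((hker y).mp hy)
  let ψ : LinearMap.range L →ₗ[R] R ⧸ c :=
    (Submodule.mapQ (LinearMap.ker L) c (LinearMap.lsmul R R u) hle) ∘ₗ L.quotKerEquivRange.symm.toLinearMap
  have hψ : ∀ r (h : L r ∈ LinearMap.range L), ψ ⟨L r, h⟩ = c.mkQ (u * r) := by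
    intro r h
    have : L.quotKerEquivRange.symm ⟨L r, h⟩ = (LinearMap.ker L).mkQ r := by
      rw [LinearEquiv.symm_apply_eq]; rfl
    change Submodule.mapQ _ _ _ hle (L.quotKerEquivRange.symm ⟨L r, h⟩) = _
    rw [this]; rfl
  obtain ⟨g, hg⟩ := hl (ψ ∘ₗ LinearMap.codRestrict _ (t • f0) hrange)
  have hgm : ∀ m, L (g m) = (u * t) • f0 m := by
    intro m
    obtain ⟨r, hr⟩ := hrange m
    have h1 := LinearMap.congr_fun hg m
    have h2 : ψ (LinearMap.codRestrict _ (t • f0) hrange m) = c.mkQ (u * r) := by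
      rw [← hψ r ⟨r, rfl⟩]
      congr 1
      exact Subtype.ext hr.symm
    rw [LinearMap.comp_apply, LinearMap.comp_apply, h2, ← sub_eq_zero, ← map_sub] at h1
    have h3 : g m - u * r ∈ p := hcp (by rwa [Submodule.mkQ_apply, Submodule.Quotient.mk_eq_zero] at h1)
    have h4 := (hker _).mpr h3
    rw [map_sub, sub_eq_zero] at h4
    rw [h4, mul_smul, ← LinearMap.smul_apply t f0, ← hr, ← smul_eq_mul, map_smul]
  let G : Localization.AtPrime p ⊗[R] M →ₗ[Localization.AtPrime p] Localization.AtPrime p :=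
    (Algebra.TensorProduct.rid R (Localization.AtPrime p) (Localization.AtPrime p)).toLinearMap ∘ₗ g.baseChange _
  have hG : ∀ a m, G (a ⊗ₜ m) = a * algebraMap R _ (g m) := by
    intro a m
    change Algebra.TensorProduct.rid R (Localization.AtPrime p) (Localization.AtPrime p) (a ⊗ₜ g m) = _
    rw [Algebra.TensorProduct.rid_tmul, Algebra.smul_def, mul_comm]
  have hut : u * t ∈ p.primeCompl := p.primeCompl.mul_mem hu ht
  obtain ⟨v, hv⟩ := (IsLocalization.map_units (Localization.AtPrime p) (⟨u * t, hut⟩ : p.primeCompl)).exists_left_inv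
  refine ⟨v • G, fun m => ?_⟩
  induction m using TensorProduct.induction_on with
  | zero => simp
  | add x y hx hy => rw [map_add, map_add, map_add, hx, hy]
  | tmul a m =>
    have h5 : f (a ⊗ₜ m) = a • f0 m := by
      rw [hf0, ← map_smul, TensorProduct.smul_tmul', smul_eq_mul, mul_one]
    have h6 : residue (Localization.AtPrime p) (algebraMap R _ (g m)) = (u * t) • f0 m := hgm m
    have h7 : (u * t) • f0 m = residue (Localization.AtPrime p) (algebraMap R _ (u * t)) * f0 m := by
      rw [Algebra.smul_def]; rfl
    have h8 : a • f0 m = residue (Localization.AtPrime p) a * f0 m := by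
      rw [Algebra.smul_def]; rfl
    rw [LinearMap.smul_apply, hG, smul_eq_mul, map_mul, map_mul, h6, h7, h5, h8]
    have h9 : residue (Localization.AtPrime p) v * residue (Localization.AtPrime p) (algebraMap R _ (u * t)) = 1 := by
      rw [← map_mul, hv, map_one]
    linear_combination (residue (Localization.AtPrime p) a * f0 m) * h9

open TensorProduct in
theorem zz_tf (R : Type) [CommRing R] (A : Type) [CommRing A] [Algebra R A] [Module.Flat R A] (x : R)
    (M : Type) [AddCommGroup M] [Module R M] (hM : ∀ m : M, x • m = 0 → m = 0)
    (m : A ⊗[R] M) (h : algebraMap R A x • m = 0) : m = 0 := by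
  have h1 : Function.Injective (LinearMap.lsmul R M x) := by
    rw [← LinearMap.ker_eq_bot, LinearMap.ker_eq_bot']
    exact hM
  have h2 := Module.Flat.lTensor_preserves_injective_linearMap (M := A) _ h1
  apply h2
  rw [map_zero, ← h]
  clear h
  induction m using TensorProduct.induction_on with
  | zero => simp
  | add x y hx hy => rw [map_add, hx, hy, smul_add]
  | tmul s b => simp [TensorProduct.smul_tmul']

open TensorProduct in
theorem zz_ind (R : Type) [CommRing R] [IsNoetherianRing R] (c p : Ideal R) [p.IsPrime] (hcp : c ≤ p)
    (u : R) (hu : u ∉ p) (hup : ∀ y ∈ p, u * y ∈ c) (x : R)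
    (hx : ∀ r, x * r = 0 → r = 0) (s : Localization.AtPrime p)
    (hs : ¬ algebraMap R _ x ∣ s)
    (hsx : ∀ y ∈ maximalIdeal (Localization.AtPrime p), algebraMap R _ x ∣ s * y) (i : ℕ) :
    ∀ (M : Type) [AddCommGroup M] [Module R M]
    [Module.Finite R M] (_ : ∀ m : M, x • m = 0 → m = 0) (_ : Subsingleton (zzE R M c (i+1))),
    Module.Free (Localization.AtPrime p) (Localization.AtPrime p ⊗[R] M) := by
  induction i with
  | zero =>
    intro M _ _ _ _ hE
    refine zz_base R c p hcp u hu hup M fun f => ?_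
    refine zz_lift R M R (R ⧸ c) c.mkQ (Submodule.mkQ_surjective _) ?_ f
    rw [Submodule.ker_mkQ]
    exact hE
  | succ i ih =>
    intro M _ _ _ hM hE
    obtain ⟨n, φ, hφ⟩ := Module.Finite.exists_fin' R M
    have hE' := zz_shift R M (Fin n → R) φ hφ c i hE
    have hF : ∀ m : Fin n → R, x • m = 0 → m = 0 := by
      intro m hm
      funext j
      exact hx _ (congrFun hm j)
    have hK := ih (LinearMap.ker φ) (fun m hm => Subtype.ext (hF m.1 (congrArg Subtype.val hm))) hE'
    refine zz_freeG (Localization.AtPrime p) (algebraMap R _ x) s hs hsx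
      (Localization.AtPrime p ⊗[R] (LinearMap.ker φ)) (Localization.AtPrime p ⊗[R] (Fin n → R))
      (Localization.AtPrime p ⊗[R] M) ((LinearMap.ker φ).subtype.baseChange _) (φ.baseChange _) ?_ ?_ ?_ ?_
    · exact Module.Flat.lTensor_preserves_injective_linearMap _ (Submodule.subtype_injective _)
    · exact LinearMap.lTensor_surjective _ hφ
    · exact lTensor_exact (Localization.AtPrime p) (LinearMap.exact_subtype_ker_map φ) hφ
    · exact zz_tf R _ x M hM

open TensorProduct in
theorem zz_contra (R : Type) [CommRing R] [IsNoetherianRing R] (c p : Ideal R) [p.IsPrime] (hcp : c ≤ p)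
    (u : R) (hu : u ∉ p) (hup : ∀ y ∈ p, u * y ∈ c) (x : R)
    (hx : ∀ r, x * r = 0 → r = 0) (hxc : x ∈ c) (s : R)
    (hs : ∀ v ∉ p, ¬ x ∣ v * s)
    (hsx : ∀ y ∈ c, ∃ y' ∈ c, s * y = x * y') (i : ℕ) (hE : Subsingleton (zzE R c c (i+1))) : False := by
  have hs' : ¬ algebraMap R (Localization.AtPrime p) x ∣ algebraMap R (Localization.AtPrime p) s := by
    rintro ⟨a, ha⟩
    obtain ⟨⟨r, t⟩, h⟩ := IsLocalization.surj p.primeCompl a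
    have h1 : algebraMap R (Localization.AtPrime p) (t * s) = algebraMap R (Localization.AtPrime p) (x * r) := by
      rw [map_mul, map_mul, ha, ← h]; ring
    obtain ⟨w, hw⟩ := (IsLocalization.eq_iff_exists p.primeCompl _).mp h1
    refine hs (w * t) (w * t).2 ⟨w * r, ?_⟩
    rw [mul_assoc, hw]; ring
  have hsx' : ∀ y ∈ maximalIdeal (Localization.AtPrime p), 
      algebraMap R _ x ∣ algebraMap R (Localization.AtPrime p) s * y := by
    intro y hy
    obtain ⟨⟨r, t⟩, h⟩ := IsLocalization.surj p.primeCompl y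
    have hr : r ∈ p := by
      rw [← IsLocalization.AtPrime.to_map_mem_maximal_iff (Localization.AtPrime p) p]
      rw [← h]
      exact Ideal.mul_mem_right _ _ hy
    obtain ⟨y', _, h2⟩ := hsx _ (hup r hr)
    have hut : u * t ∈ p.primeCompl := p.primeCompl.mul_mem hu t.2
    obtain ⟨v, hv⟩ := (IsLocalization.map_units (Localization.AtPrime p) (⟨u * t, hut⟩ : p.primeCompl)).exists_left_inv
    refine ⟨v * algebraMap R _ y', ?_⟩
    have h3 := congrArg (algebraMap R (Localization.AtPrime p)) h2
    simp only [map_mul] at h3 hv h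
    rw [← h] at h3
    linear_combination v * h3 - (algebraMap R (Localization.AtPrime p) s * y) * hv
  have hfree := zz_ind R c p hcp u hu hup x hx (algebraMap R _ s) hs' hsx' i c
    (fun m hm => Subtype.ext (hx m.1 (congrArg Subtype.val hm))) hE
  let A := Localization.AtPrime p
  let b := Module.Free.chooseBasis A (A ⊗[R] c)
  have hne : (1 : A) ⊗ₜ[R] (⟨x, hxc⟩ : c) ≠ 0 := by
    intro h
    have h1 := congrArg (LinearMap.lTensor A c.subtype) h
    rw [LinearMap.lTensor_tmul, map_zero] at h1
    have h2 := congrArg (TensorProduct.rid R A) h1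
    rw [TensorProduct.rid_tmul, map_zero] at h2
    have h3 : algebraMap R A x = 0 := by
      rw [Algebra.smul_def, mul_one] at h2; exact h2
    obtain ⟨w, hw⟩ := (IsLocalization.map_eq_zero_iff p.primeCompl A x).mp h3
    have h4 := hx w (by rw [mul_comm]; exact hw)
    exact w.2 (by rw [h4]; exact p.zero_mem)
  have hdiv : ∀ z : A ⊗[R] c, ∃ z', algebraMap R A s • z = algebraMap R A x • z' := by
    intro z
    induction z using TensorProduct.induction_on with
    | zero => exact ⟨0, by simp⟩
    | add a b ha hb =>
      obtain ⟨a', ha⟩ := ha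
      obtain ⟨b', hb⟩ := hb
      exact ⟨a' + b', by rw [smul_add, smul_add, ha, hb]⟩
    | tmul a y =>
      obtain ⟨y', hy', h⟩ := hsx y.1 y.2
      refine ⟨a ⊗ₜ ⟨y', hy'⟩, ?_⟩
      rw [algebraMap_smul, algebraMap_smul, ← TensorProduct.tmul_smul, ← TensorProduct.tmul_smul]
      congr 1
      exact Subtype.ext h
  have hidx : Nonempty (Module.Free.ChooseBasisIndex A (A ⊗[R] c)) := by
    by_contra hcon
    rw [not_nonempty_iff] at hcon
    exact hne (b.ext_elem fun j => (hcon.false j).elim)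
  obtain ⟨j⟩ := hidx
  obtain ⟨z', hz⟩ := hdiv (b j)
  apply hs'
  refine ⟨b.repr z' j, ?_⟩
  have := congrArg (fun t => b.repr t j) hz
  simp only [map_smul, Finsupp.smul_apply, smul_eq_mul, Module.Basis.repr_self, Finsupp.single_eq_same, mul_one] at this
  exact this

theorem zz_mem_c (R : Type) [CommRing R] (r : R) : r ∈ conductorIdeal R ↔
    ∀ b : FractionRing R, IsIntegral R b → ∃ a : R, algebraMap R (FractionRing R) a = algebraMap R _ r * b := by
  rw [conductorIdeal, Module.mem_annihilator]
  constructor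
  · intro h b hb
    have h1 := h (Submodule.Quotient.mk ⟨b, hb⟩)
    rw [← Submodule.Quotient.mk_smul, Submodule.Quotient.mk_eq_zero] at h1
    obtain ⟨a, ha⟩ := h1
    refine ⟨a, ?_⟩
    have := congrArg Subtype.val ha
    rw [← Algebra.smul_def]
    exact this
  · intro h z
    obtain ⟨b, rfl⟩ := Submodule.Quotient.mk_surjective _ z
    rw [← Submodule.Quotient.mk_smul, Submodule.Quotient.mk_eq_zero]
    obtain ⟨a, ha⟩ := h b.1 b.2
    refine ⟨a, Subtype.ext ?_⟩
    rw [← Algebra.smul_def] at ha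
    exact ha

theorem zz_radical (R : Type) [CommRing R]
    (hsn : IsReduced R ∧ ∀ b c : R, b ^ 3 = c ^ 2 → ∃ a : R, a ^ 2 = b ∧ a ^ 3 = c) :
    (conductorIdeal R).IsRadical := by
  obtain ⟨hred, hsn⟩ := hsn
  have hinj : Function.Injective (algebraMap R (FractionRing R)) := IsFractionRing.injective R _
  have hredF : IsReduced (FractionRing R) := by unfold FractionRing; infer_instance
  have h1 : ∀ z : FractionRing R, (∃ b, algebraMap R _ b = z ^ 2) → (∃ c, algebraMap R _ c = z ^ 3) →
      ∃ a, algebraMap R _ a = z := by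
    rintro z ⟨b, hb⟩ ⟨c, hc⟩
    obtain ⟨a, ha, ha'⟩ := hsn b c (hinj (by rw [map_pow, map_pow, hb, hc]; ring))
    refine ⟨a, ?_⟩
    have e1 : (algebraMap R (FractionRing R) a) ^ 2 = z ^ 2 := by rw [← map_pow, ha, hb]
    have e2 : (algebraMap R (FractionRing R) a) ^ 3 = z ^ 3 := by rw [← map_pow, ha', hc]
    have e3 : (algebraMap R (FractionRing R) a - z) ^ 3 = 0 := by
      linear_combination 4 * e2 - 3 * (z + algebraMap R (FractionRing R) a) * e1
    exact sub_eq_zero.mp (pow_eq_zero_iff (by norm_num) |>.mp e3)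
  have h2 : ∀ n : ℕ, ∀ y : FractionRing R, (∀ m ≥ n, ∃ a, algebraMap R _ a = y ^ m) → 
      ∃ a, algebraMap R _ a = y := by
    intro n
    induction n with
    | zero => intro y h; simpa using h 1 (by omega)
    | succ n ih =>
      intro y h
      rcases Nat.eq_zero_or_pos n with rfl | hn
      · simpa using h 1 (by omega)
      · apply ih
        intro m hm
        rcases Nat.lt_or_ge n m with h3 | h3
        · exact h m (by omega)
        · obtain rfl : m = n := by omega
          apply h1
          · rw [← pow_mul]; exact h _ (by omega)
          · rw [← pow_mul]; exact h _ (by omega)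
  intro r hr
  obtain ⟨n, hn⟩ := hr
  rw [zz_mem_c]
  intro b hb
  apply h2 n
  intro m hm
  obtain ⟨k, rfl⟩ := Nat.exists_eq_add_of_le hm
  obtain ⟨a, ha⟩ := (zz_mem_c R _).mp hn (algebraMap R _ r ^ k * b ^ (n + k)) (by
    exact (isIntegral_algebraMap.pow k).mul (hb.pow _))
  refine ⟨a, ?_⟩
  rw [ha, map_pow]; ring

theorem stmt4 (R : Type) [CommRing R] [IsLocalRing R] [IsNoetherianRing R]
    (hau : AnalyticallyUnramified R)
    (hsn : IsReduced R ∧ ∀ b c : R, b ^ 3 = c ^ 2 → ∃ a : R, a ^ 2 = b ∧ a ^ 3 = c)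
    (hext : ∃ i : ℕ, 0 < i ∧
      Subsingleton (ExtMod R ↥(conductorIdeal R) ↥(conductorIdeal R) i)) :
    Module.Free R ↥(conductorIdeal R) ∧ IsNormalRing R := by
  have hfin := zz_finite R hau
  have hrad := zz_radical R hsn
  have hinj : Function.Injective (algebraMap R (FractionRing R)) := IsFractionRing.injective R _
  by_cases htop : conductorIdeal R = ⊤
  · refine ⟨?_, hsn.1, ?_⟩
    · rw [htop]
      exact Module.Free.of_equiv (Submodule.topEquiv (R := R) (M := R)).symm
    · rw [eq_bot_iff]
      intro b hb
      have h1 : (1 : R) ∈ conductorIdeal R := by rw [htop]; trivial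
      obtain ⟨a, ha⟩ := (zz_mem_c R 1).mp h1 b hb
      rw [map_one, one_mul] at ha
      rw [← ha]
      exact Subalgebra.algebraMap_mem _ _
  exfalso
  obtain ⟨i, hi, hE⟩ := hext
  obtain ⟨i, rfl⟩ : ∃ j, i = j + 1 := ⟨i - 1, by omega⟩
  have hE' := zz_bridge R _ _ i hE
  obtain ⟨p, hp⟩ := Ideal.nonempty_minimalPrimes htop
  have hpp : p.IsPrime := hp.1.1
  have hcp : conductorIdeal R ≤ p := hp.1.2
  obtain ⟨u, hu, hup⟩ := zz_min_all R _ p hrad hp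
  obtain ⟨S, hS⟩ := Module.Finite.iff_fg (N := Subalgebra.toSubmodule (integralClosure R (FractionRing R))) |>.mp hfin
  have hint : ∀ b : FractionRing R, IsIntegral R b ↔ b ∈ Submodule.span R (S : Set (FractionRing R)) := by
    intro b; rw [hS]; rfl
  have hcS : ∀ r : R, (∀ b ∈ S, ∃ a : R, algebraMap R (FractionRing R) a = algebraMap R _ r * b) →
      r ∈ conductorIdeal R := by
    intro r h
    rw [zz_mem_c]
    intro b hb
    rw [hint] at hb
    refine Submodule.span_induction ?_ ?_ ?_ ?_ hb
    · intro z hz; exact h z hz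
    · exact ⟨0, by simp⟩
    · rintro a b _ _ ⟨a', ha⟩ ⟨b', hb⟩; exact ⟨a' + b', by rw [map_add, ha, hb, mul_add]⟩
    · rintro a b _ ⟨b', hb⟩; exact ⟨a * b', by rw [map_mul, hb, Algebra.smul_def]; ring⟩
  obtain ⟨⟨x, hxn⟩, hxS⟩ := IsLocalization.exist_integer_multiples_of_finset (nonZeroDivisors R) S
  have hxc : x ∈ conductorIdeal R := by
    apply hcS
    intro b hb
    obtain ⟨a, ha⟩ := hxS b hb
    exact ⟨a, by rw [ha, Algebra.smul_def]⟩
  have hx : ∀ r, x * r = 0 → r = 0 := (mem_nonZeroDivisors_iff.mp hxn).1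
  have hxu : IsUnit (algebraMap R (FractionRing R) x) := IsLocalization.map_units _ (⟨x, hxn⟩ : nonZeroDivisors R)
  have hb : ∃ b : FractionRing R, IsIntegral R b ∧ ∃ s : R, algebraMap R _ s = algebraMap R _ x * b ∧
      ∀ v ∉ p, ¬ x ∣ v * s := by
    by_contra! hcon
    have h1 : ∀ b ∈ S, ∃ v ∉ p, ∃ a : R, algebraMap R (FractionRing R) a = algebraMap R _ v * b := by
      intro b hb
      have hbi : IsIntegral R b := (hint b).mpr (Submodule.subset_span hb)
      obtain ⟨s, hs⟩ := (zz_mem_c R x).mp hxc b hbi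
      obtain ⟨v, hv, a, ha⟩ := hcon b hbi s hs
      refine ⟨v, hv, a, ?_⟩
      apply hxu.mul_left_cancel
      rw [← map_mul, ← ha, map_mul, hs]; ring
    choose! v hv hv' using h1
    classical
    have h2 : ∏ b ∈ S, v b ∈ conductorIdeal R := by
      apply hcS
      intro b hb
      obtain ⟨a, ha⟩ := hv' b hb
      refine ⟨(∏ b ∈ S.erase b, v b) * a, ?_⟩
      rw [← Finset.mul_prod_erase _ _ hb, map_mul, map_mul, ha]; ring
    obtain ⟨b, hb, h3⟩ := (hpp.prod_mem_iff).mp (hcp h2)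
    exact hv b hb h3
  obtain ⟨b, hbi, s, hs, hsv⟩ := hb
  refine zz_contra R (conductorIdeal R) p hcp u hu hup x hx hxc s hsv ?_ i hE'
  intro y hy
  obtain ⟨y', hy'⟩ := (zz_mem_c R y).mp hy b hbi
  refine ⟨y', ?_, ?_⟩
  · rw [zz_mem_c]
    intro d hd
    obtain ⟨a, ha⟩ := (zz_mem_c R y).mp hy (b * d) (hbi.mul hd)
    exact ⟨a, by rw [ha, hy']; ring⟩
  · apply hinj
    rw [map_mul, map_mul, hs, hy']; ring
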